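/- arXiv:1108.5930 — 2 statements merged into one kernel-verified Lean document; each statement's English description precedes it below -/
import Mathlib

section
/- (Sums of squares SDP duality.) Let L be a linear pencil of size m in n variables and f ∈ ℝ[X₁,…,Xₙ]₁ a linear polynomial. Let s(d) denote the number of monomials of degree at most d in n variables and let [X]_d ∈ ℝ[X₁,…,Xₙ]^(s(d)) be the column vector of these monomials. Then f ≥ 0 on S_L if and only if there exist quadratic sos-matrices S₁,…,Sₙ ∈ ℝ[X₁,…,Xₙ]^(m×m), symmetric matrices U₁,…,Uₙ ∈ ℝ^(s(1)×s(1)), matrices W₁,…,Wₙ ∈ ℝ^(s(2)×s(1)), a positive semidefinite matrix S ∈ ℝ^(m×m), and c ≥ 0 such that, with W₀ := 0: (1) [X]₁ᵀ Uᵢ [X]₁ + [X]₂ᵀ W_{i−1} [X]₁ + tr(L·Sᵢ) = 0 for all i ∈ {1,…,n}; (2) Uᵢ − WᵢᵀWᵢ is positive semidefinite for all i ∈ {1,…,n}; (3) f − c + [X]₂ᵀ Wₙ [X]₁ − tr(L·S) = 0. -/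
open MvPolynomial Matrix

/-- The linear pencil `L = A 0 + X 1 * A 1 + ... + X n * A n` as a symmetric matrix
with entries in the polynomial ring `ℝ[X 1, ..., X n]`. -/
noncomputable def pencilPoly {n m : ℕ} (A : Fin (n+1) → Matrix (Fin m) (Fin m) ℝ) :
    Matrix (Fin m) (Fin m) (MvPolynomial (Fin n) ℝ) :=
  fun a b => MvPolynomial.C (A 0 a b) + ∑ i : Fin n, MvPolynomial.X i * MvPolynomial.C (A i.succ a b)

/-- Evaluation of the pencil at a point `x ∈ ℝⁿ`. -/
def pencilEval {n m : ℕ} (A : Fin (n+1) → Matrix (Fin m) (Fin m) ℝ) (x : Fin n → ℝ) :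
    Matrix (Fin m) (Fin m) ℝ :=
  A 0 + ∑ i : Fin n, x i • A i.succ

/-- The spectrahedron `S_L = {x ∈ ℝⁿ ∣ L(x) ⪰ 0}`. -/
def specSet {n m : ℕ} (A : Fin (n+1) → Matrix (Fin m) (Fin m) ℝ) : Set (Fin n → ℝ) :=
  {x | (pencilEval A x).PosSemidef}

/-- `vᵀ L v` for a vector `v` of polynomials. -/
noncomputable def vLv {n m : ℕ} (A : Fin (n+1) → Matrix (Fin m) (Fin m) ℝ)
    (v : Fin m → MvPolynomial (Fin n) ℝ) : MvPolynomial (Fin n) ℝ :=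
  ∑ a : Fin m, ∑ b : Fin m, v a * pencilPoly A a b * v b

/-- Membership in the quadratic module `M_L` associated to the pencil `L`:
`p = s + Σⱼ vⱼᵀ L vⱼ` with `s` a sum of squares. -/
def memQM {n m : ℕ} (A : Fin (n+1) → Matrix (Fin m) (Fin m) ℝ)
    (p : MvPolynomial (Fin n) ℝ) : Prop :=
  ∃ (k r : ℕ) (q : Fin k → MvPolynomial (Fin n) ℝ)
    (v : Fin r → Fin m → MvPolynomial (Fin n) ℝ),
    p = ∑ i, (q i)^2 + ∑ j, vLv A (v j)

/-- An sos-matrix: a matrix polynomial of the form `Pᵀ P`. -/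
def IsSosMatrix {n m : ℕ} (S : Matrix (Fin m) (Fin m) (MvPolynomial (Fin n) ℝ)) : Prop :=
  ∃ (s : ℕ) (P : Matrix (Fin s) (Fin m) (MvPolynomial (Fin n) ℝ)), S = Pᵀ * P

/-- The column vector `[X]_d` of all monomials of degree at most `d` in `n` variables,
indexed by `Sym (Fin (n+1)) d` (multisets of size `d` over `{0, 1, …, n}`, where the
index `0` plays the role of a homogenizing variable evaluated at `1`): the map sending
such a multiset to the corresponding monomial is a bijection onto the monomials of degree
at most `d`, and `Fintype.card (Sym (Fin (n+1)) d) = (d+n).choose n = s(d)`. -/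
noncomputable def monVec (n d : ℕ) : Sym (Fin (n+1)) d → MvPolynomial (Fin n) ℝ :=
  fun s => (Multiset.map (fun i : Fin (n+1) =>
      Fin.cases (motive := fun _ => MvPolynomial (Fin n) ℝ) 1 (fun j => MvPolynomial.X j) i)
      (s : Multiset (Fin (n+1)))).prod

/-- The scalar polynomial `[X]_eᵀ W [X]_d` for a real matrix `W`. -/
noncomputable def quadFormPoly {n d e : ℕ}
    (W : Matrix (Sym (Fin (n+1)) e) (Sym (Fin (n+1)) d) ℝ) : MvPolynomial (Fin n) ℝ :=
  ∑ a, ∑ b, MvPolynomial.C (W a b) * monVec n e a * monVec n d b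

/-!
In a solution of (1) and (2), `Wᵢ [X]₁` vanishes on `S_L` by induction on `i`: at a point where
`W_{i-1} [X]₁` vanishes, `[X]₁ᵀ Uᵢ [X]₁ = -tr (L Sᵢ) ≤ 0`, while `Uᵢ ⪰ Wᵢᵀ Wᵢ`. Hence (3) gives
`f = c + tr (L S) ≥ 0` on `S_L`.

Conversely, let `V` be a space of linear polynomials such that every `W` with rows in `V` ends a
solution of (1) and (2) of length `k`, and suppose that `1, f ∉ V`. Convex separation modulo `V`,
applied to the squares of the form `uᵀ L w` extended by the diagonal entries `1` and `-f`, yields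
either a point of `S_L` with `f < 0` or a nontrivial sum of squares in `V`. In the latter case
`f = c + tr (L S)` modulo `V`, which is (3), or there is a linear `ℓ ∉ V` such that
`ℓ² + tr (L S)` is of the form `[X]₂ᵀ W [X]₁` with the rows of `W` in `V`; then `V + ℝ ℓ` is
obtained in the same way by solutions of length `k + 1`. After `n` enlargements, `V` contains `1`
or is the space of all linear polynomials vanishing at some point, and (3) is immediate.
-/

section ConvexHull

variable {E : Type*} [AddCommGroup E] [Module ℝ E] [FiniteDimensional ℝ E]

/- Carathéodory's theorem, padded with zero weights so that the index type does not depend on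
the point. -/
lemma exists_stdSimplex_of_mem_convexHull {s : Set E} {y : E} (hy : y ∈ convexHull ℝ s) :
    ∃ w ∈ stdSimplex ℝ (Fin (Module.finrank ℝ E + 1)),
      ∃ z : Fin (Module.finrank ℝ E + 1) → E, (∀ i, z i ∈ s) ∧ ∑ i, w i • z i = y := by
  obtain ⟨ι, _, z, w, hzs, hind, hw, hw1, rfl⟩ := eq_pos_convex_span_of_mem_convexHull hy
  obtain ⟨e⟩ : Nonempty (ι ↪ Fin (Module.finrank ℝ E + 1)) :=
    Function.Embedding.nonempty_of_card_le <| by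
      rw [Fintype.card_fin]
      exact hind.card_le_finrank_succ.trans (Nat.succ_le_succ (Submodule.finrank_le _))
  obtain ⟨z₀, hz₀⟩ : s.Nonempty := convexHull_nonempty_iff.1 ⟨_, hy⟩
  have hwe : ∀ j ∉ Set.range e, Function.extend e w 0 j = 0 := fun j hj => by
    rw [Function.extend_apply' _ _ _ hj, Pi.zero_apply]
  refine ⟨Function.extend e w 0, ⟨fun j => ?_, ?_⟩, Function.extend e z fun _ => z₀,
    fun j => ?_, ?_⟩
  · by_cases hj : j ∈ Set.range e
    · obtain ⟨i, rfl⟩ := hj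
      simpa only [e.injective.extend_apply] using (hw i).le
    · exact (hwe j hj).ge
  · rw [← hw1]
    exact (Fintype.sum_of_injective e e.injective _ _ hwe
      fun i => (e.injective.extend_apply w 0 i).symm).symm
  · by_cases hj : j ∈ Set.range e
    · obtain ⟨i, rfl⟩ := hj
      simpa only [e.injective.extend_apply] using hzs ⟨i, rfl⟩
    · rwa [Function.extend_apply' _ _ _ hj]
  · refine (Fintype.sum_of_injective e e.injective _ _ (fun j hj => ?_) fun i => ?_).symm
    · rw [hwe j hj, zero_smul]
    · simp only [e.injective.extend_apply]

lemma isCompact_convexHull [TopologicalSpace E] [IsTopologicalAddGroup E] [ContinuousSMul ℝ E]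
    {s : Set E} (hs : IsCompact s) : IsCompact (convexHull ℝ s) := by
  let N := Module.finrank ℝ E + 1
  have himage : convexHull ℝ s = (fun p : (Fin N → ℝ) × (Fin N → E) => ∑ i, p.1 i • p.2 i) ''
      stdSimplex ℝ (Fin N) ×ˢ Set.univ.pi fun _ => s := by
    ext y
    constructor
    · intro hy
      obtain ⟨w, hw, z, hz, rfl⟩ := exists_stdSimplex_of_mem_convexHull hy
      exact ⟨(w, z), ⟨hw, fun i _ => hz i⟩, rfl⟩
    · rintro ⟨⟨w, z⟩, ⟨hw, hz⟩, rfl⟩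
      exact mem_convexHull_of_exists_fintype w z hw.1 hw.2 (fun i => hz i trivial) rfl
  rw [himage]
  exact ((isCompact_stdSimplex ℝ _).prod (isCompact_univ_pi fun _ => hs)).image (by fun_prop)

end ConvexHull

section Alternative

lemma exists_linearMap_pos_of_disjoint {E : Type*} [AddCommGroup E] [Module ℝ E]
    [TopologicalSpace E] [IsTopologicalAddGroup E] [ContinuousSMul ℝ E] [LocallyConvexSpace ℝ E]
    {K : Set E} {V : Submodule ℝ E} (hconv : Convex ℝ K) (hcomp : IsCompact K)
    (hV : IsClosed (V : Set E)) (hdisj : Disjoint K V) :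
    ∃ φ : E →ₗ[ℝ] ℝ, V ≤ LinearMap.ker φ ∧ ∀ x ∈ K, 0 < φ x := by
  obtain ⟨φ, a, b, ha, hab, hb⟩ :=
    geometric_hahn_banach_compact_closed hconv hcomp V.convex hV hdisj
  have hb0 : b < 0 := by simpa using hb 0 V.zero_mem
  refine ⟨-φ.toLinearMap, fun v hv => ?_, fun x hx => neg_pos.2 ((ha x hx).trans (hab.trans hb0))⟩
  rw [LinearMap.mem_ker, LinearMap.neg_apply, neg_eq_zero]
  by_contra hne
  have hlt := hb ((b / φ v) • v) (V.smul_mem _ hv)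
  rw [map_smul, smul_eq_mul] at hlt
  exact hlt.ne' (div_mul_cancel₀ _ hne)

variable {E F : Type*} [NormedAddCommGroup E] [NormedSpace ℝ E] [FiniteDimensional ℝ E]
  [NormedAddCommGroup F] [NormedSpace ℝ F] [FiniteDimensional ℝ F]

lemma exists_posDef_or_exists_sum_mem (B : F →ₗ[ℝ] F →ₗ[ℝ] E) (V : Submodule ℝ E) :
    (∃ φ : E →ₗ[ℝ] ℝ, V ≤ LinearMap.ker φ ∧ ∀ x ≠ 0, 0 < φ (B x x)) ∨
      ∃ (r : ℕ) (x : Fin r → F), (∃ i, x i ≠ 0) ∧ ∑ i, B (x i) (x i) ∈ V := by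
  let K : Set E := (fun x => B x x) '' Metric.sphere 0 1
  have hK : IsCompact K := by
    refine (isCompact_sphere 0 1).image ?_
    change Continuous fun x => B.toContinuousBilinearMap x x
    fun_prop
  by_cases hdisj : Disjoint (convexHull ℝ K) V
  · left
    obtain ⟨φ, hφV, hφ⟩ := exists_linearMap_pos_of_disjoint (convex_convexHull ℝ K)
      (isCompact_convexHull hK) V.closed_of_finiteDimensional hdisj
    refine ⟨φ, hφV, fun x hx => ?_⟩
    have hpos := hφ _ (subset_convexHull ℝ K ⟨‖x‖⁻¹ • x, by simp [norm_smul, hx], rfl⟩)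
    simp only [map_smul, LinearMap.smul_apply, smul_eq_mul] at hpos
    have hinv : 0 < ‖x‖⁻¹ := inv_pos.2 (norm_pos_iff.2 hx)
    exact pos_of_mul_pos_right (pos_of_mul_pos_right hpos hinv.le) hinv.le
  · right
    obtain ⟨y, hyK, hyV⟩ := Set.not_disjoint_iff.1 hdisj
    obtain ⟨w, hw, z, hz, rfl⟩ := exists_stdSimplex_of_mem_convexHull hyK
    choose x hx hxz using hz
    refine ⟨_, fun i => √(w i) • x i, ?_, ?_⟩
    · obtain ⟨i, -, hi⟩ := Finset.exists_ne_zero_of_sum_ne_zero (hw.2.trans_ne one_ne_zero)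
      refine ⟨i, smul_ne_zero (Real.sqrt_ne_zero'.2 ((hw.1 i).lt_of_ne' hi)) ?_⟩
      exact ne_zero_of_mem_unit_sphere ⟨x i, hx i⟩
    · simpa only [map_smul, LinearMap.smul_apply, smul_smul, Real.mul_self_sqrt (hw.1 _), hxz,
        SetLike.mem_coe]
        using hyV

/- The definite alternative applied on a complement of the radical of `B` modulo `V`. -/
lemma exists_posSemidef_or_exists_sum_mem {B : F →ₗ[ℝ] F →ₗ[ℝ] E} (hB : ∀ x y, B x y = B y x)
    (V : Submodule ℝ E) :
    (∃ φ : E →ₗ[ℝ] ℝ, V ≤ LinearMap.ker φ ∧ (∀ x, 0 ≤ φ (B x x)) ∧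
        ∀ x y, B x y ∉ V → 0 < φ (B x x)) ∨
      ∃ (r : ℕ) (x : Fin r → F), (∃ i y, B (x i) y ∉ V) ∧ ∑ i, B (x i) (x i) ∈ V := by
  let N : Submodule ℝ F := LinearMap.ker (B.compr₂ V.mkQ)
  have hN : ∀ {x}, x ∈ N ↔ ∀ y, B x y ∈ V := by
    simp [N, LinearMap.ext_iff]
  obtain ⟨K, hK⟩ := N.exists_isCompl
  refine (exists_posDef_or_exists_sum_mem (B.domRestrict₁₂ K K) V).imp ?_ ?_
  · rintro ⟨φ, hφV, hφ⟩
    have hmod : ∀ a ∈ N, ∀ b, φ (B (a + b) (a + b)) = φ (B b b) := fun a ha b => by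
      have hker : ∀ y, φ (B a y) = 0 := fun y => hφV (hN.1 ha y)
      simp only [map_add, LinearMap.add_apply, hB b a, hker, zero_add]
    have hdecomp : ∀ x, ∃ a ∈ N, ∃ b ∈ K, a + b = x := fun x =>
      Submodule.mem_sup.1 (hK.sup_eq_top ▸ Submodule.mem_top)
    refine ⟨φ, hφV, fun x => ?_, fun x y hxy => ?_⟩ <;> obtain ⟨a, ha, b, hb, rfl⟩ := hdecomp x <;>
      rw [hmod a ha]
    · rcases eq_or_ne b 0 with rfl | hb0
      · simp
      · exact (hφ ⟨b, hb⟩ (by simpa using hb0)).le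
    · refine hφ ⟨b, hb⟩ fun hb0 => hxy ?_
      rw [Submodule.mk_eq_zero] at hb0
      rw [hb0, add_zero]
      exact hN.1 ha y
  · rintro ⟨r, x, ⟨i, hi⟩, hsum⟩
    refine ⟨r, fun j => x j, ⟨i, ?_⟩, hsum⟩
    by_contra! hx
    exact hi (Subtype.ext (Submodule.disjoint_def.1 hK.disjoint _ (hN.2 hx) (x i).2))

end Alternative

section Gram

variable {R ι κ : Type*} [CommRing R] [Fintype ι]

lemma two_nsmul_gram_add_gram_sub_gram_add (M N : Matrix ι κ R) :
    2 • (Mᵀ * M + Nᵀ * N) - (M + N)ᵀ * (M + N) = (M - N)ᵀ * (M - N) := by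
  simp only [two_nsmul, transpose_add, transpose_sub, Matrix.add_mul, Matrix.mul_add,
    Matrix.sub_mul, Matrix.mul_sub]
  abel

lemma gram_eq_sum_vecMulVec (M : Matrix ι κ R) : Mᵀ * M = ∑ i, vecMulVec (M i) (M i) := by
  ext a b
  simp only [Matrix.mul_apply, transpose_apply, Matrix.sum_apply, vecMulVec_apply]

variable [Fintype κ]

lemma trace_mul_transpose_mul (L : Matrix κ κ R) (M N : Matrix ι κ R) :
    (L * (Mᵀ * N)).trace = ∑ i, N i ⬝ᵥ L *ᵥ M i := by
  rw [← Matrix.mul_assoc, trace_mul_comm]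
  rfl

lemma trace_mul_gram_add {L : Matrix κ κ R} (hL : L.IsSymm) (M N : Matrix ι κ R) :
    (L * ((M + N)ᵀ * (M + N))).trace =
      (L * (Mᵀ * M)).trace + 2 * (L * (Mᵀ * N)).trace + (L * (Nᵀ * N)).trace := by
  have hswap : (L * (Nᵀ * M)).trace = (L * (Mᵀ * N)).trace := by
    rw [← trace_transpose, transpose_mul, transpose_mul, transpose_transpose, hL.eq,
      trace_mul_comm]
  simp only [transpose_add, Matrix.add_mul, Matrix.mul_add, trace_add, hswap]
  ring

lemma trace_mul_gram_smul_add_single [DecidableEq ι] {L : Matrix κ κ R} (hL : L.IsSymm)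
    (M : Matrix ι κ R) (p l : R) (k : ι) (w : κ → R) {P : Matrix ι κ R}
    (hP : P = p • M + of (Pi.single k (l • w))) :
    (L * (Pᵀ * P)).trace =
      p ^ 2 * (L * (Mᵀ * M)).trace + 2 * (p * l * (w ⬝ᵥ L *ᵥ M k)) + l ^ 2 * (w ⬝ᵥ L *ᵥ w) := by
  set N : Matrix ι κ R := of (Pi.single k (l • w))
  have hNk : N k = l • w := Pi.single_eq_same _ _
  have hN : ∀ Q : Matrix ι κ R, (L * (Qᵀ * N)).trace = l * (w ⬝ᵥ L *ᵥ Q k) := fun Q => by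
    have hNi : ∀ i ≠ k, N i = 0 := fun i hi => Pi.single_eq_of_ne hi _
    rw [trace_mul_transpose_mul, Fintype.sum_eq_single k fun i hi => by
      rw [hNi i hi, zero_dotProduct], hNk, smul_dotProduct, smul_eq_mul]
  have hpM : (p • M) k = p • M k := rfl
  rw [hP, trace_mul_gram_add hL, hN, hN, hpM, hNk, mulVec_smul, mulVec_smul, dotProduct_smul,
    dotProduct_smul]
  simp only [transpose_smul, Matrix.smul_mul, Matrix.mul_smul, trace_smul, smul_eq_mul]
  ring

end Gram

lemma exists_eq_add_vecMulVec {K ι κ : Type*} [Field K] {V : Submodule K (κ → K)} {ℓ : κ → K}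
    {W : Matrix ι κ K} (hW : ∀ a, W a ∈ V ⊔ Submodule.span K {ℓ}) :
    ∃ (M : Matrix ι κ K) (t : ι → K), (∀ a, M a ∈ V) ∧ W = M + vecMulVec t ℓ := by
  simp only [Submodule.mem_sup, Submodule.mem_span_singleton, exists_exists_eq_and] at hW
  choose M hM t ht using hW
  exact ⟨of M, t, hM, funext fun a => (ht a).symm⟩

lemma exists_eq_transpose_mul_self_of_posSemidef {κ : Type*} [Finite κ] {S : Matrix κ κ ℝ}
    (hS : S.PosSemidef) : ∃ (r : ℕ) (P : Matrix (Fin r) κ ℝ), S = Pᵀ * P := by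
  obtain ⟨r, v, rfl⟩ := posSemidef_iff_eq_sum_vecMulVec.1 hS
  exact ⟨r, of v, (gram_eq_sum_vecMulVec _).symm⟩

lemma mulVec_eq_zero_of_posSemidef_sub_gram {ι κ : Type*} [Fintype ι] [Fintype κ]
    {U : Matrix κ κ ℝ} {W : Matrix ι κ ℝ} (h : (U - Wᵀ * W).PosSemidef) {v : κ → ℝ}
    (hv : v ⬝ᵥ U *ᵥ v ≤ 0) : W *ᵥ v = 0 := by
  have hnonneg := h.dotProduct_mulVec_nonneg v
  rw [sub_mulVec, dotProduct_sub, ← mulVec_mulVec, mulVec_transpose, star_trivial,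
    dotProduct_comm v (_ ᵥ* _), ← dotProduct_mulVec, sub_nonneg] at hnonneg
  exact dotProduct_self_eq_zero.1 <| le_antisymm (hnonneg.trans hv) <|
    Finset.sum_nonneg fun _ _ => mul_self_nonneg _

section Coefficients

variable {n d : ℕ}

/-- The coefficient vectors, along `monVec n d`, of the polynomials of degree at most `d` in `n`
variables. -/
abbrev Coeff (n d : ℕ) : Type := Sym (Fin (n + 1)) d → ℝ

/-- The polynomial `cᵀ [X]_d` with coefficient vector `c`. -/
noncomputable def coeffPoly (n d : ℕ) : Coeff n d →ₗ[ℝ] MvPolynomial (Fin n) ℝ :=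
  Fintype.linearCombination ℝ (monVec n d)

/-- The coefficient vector of the constant polynomial `1`. -/
def coeffOne (n : ℕ) : Coeff n 1 := Pi.single (Sym.oneEquiv 0) 1

lemma totalDegree_monVec_le (s : Sym (Fin (n + 1)) d) : (monVec n d s).totalDegree ≤ d := by
  refine (totalDegree_multiset_prod _).trans ?_
  rw [Multiset.map_map]
  refine (Multiset.sum_le_card_nsmul _ 1 fun k hk => ?_).trans_eq (by simp)
  obtain ⟨i, -, rfl⟩ := Multiset.mem_map.1 hk
  cases i using Fin.cases <;> simp

lemma totalDegree_coeffPoly_le (c : Coeff n d) : (coeffPoly n d c).totalDegree ≤ d := by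
  rw [coeffPoly, Fintype.linearCombination_apply]
  exact totalDegree_finsetSum_le fun s _ =>
    (totalDegree_smul_le _ _).trans (totalDegree_monVec_le s)

/- A monomial of degree at most `d` is homogenized by the variable of index `0`. -/
lemma exists_monVec_eq_monomial {s : Fin n →₀ ℕ} (hs : s.degree ≤ d) :
    ∃ t, monVec n d t = monomial s 1 := by
  refine ⟨⟨Multiset.replicate (d - s.degree) 0 + s.toMultiset.map Fin.succ, ?_⟩, ?_⟩
  · have hcard : Multiset.card s.toMultiset = s.degree := Finsupp.card_toMultiset s
    simp only [Multiset.card_add, Multiset.card_replicate, Multiset.card_map, hcard]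
    omega
  · simp only [monVec, Sym.coe_mk, Multiset.map_add, Multiset.prod_add, Multiset.map_replicate,
      Fin.cases_zero, Multiset.prod_replicate, one_pow, one_mul, Multiset.map_map,
      Function.comp_def, Fin.cases_succ]
    change (s.toMultiset.map X).prod = _
    rw [monomial_eq, C_1, one_mul, Finsupp.toMultiset_map, Finsupp.prod_toMultiset,
      Finsupp.prod_mapDomain_index pow_zero pow_add]

lemma mem_range_coeffPoly {f : MvPolynomial (Fin n) ℝ} (hf : f.totalDegree ≤ d) :
    f ∈ LinearMap.range (coeffPoly n d) := by
  rw [f.as_sum]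
  refine Submodule.sum_mem _ fun s hs => ?_
  obtain ⟨t, ht⟩ := exists_monVec_eq_monomial ((le_totalDegree hs).trans hf)
  refine ⟨Pi.single t (coeff s f), ?_⟩
  rw [coeffPoly, Fintype.linearCombination_apply_single, ht, smul_monomial, smul_eq_mul, mul_one]

lemma coeffPoly_one_apply (v : Coeff n 1) :
    coeffPoly n 1 v = C (v (Sym.oneEquiv 0)) + ∑ j, X j * C (v (Sym.oneEquiv j.succ)) := by
  rw [coeffPoly, Fintype.linearCombination_apply, ← Equiv.sum_comp Sym.oneEquiv,
    Fin.sum_univ_succ]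
  simp [monVec, smul_eq_C_mul, mul_comm]

lemma coeffPoly_coeffOne (n : ℕ) : coeffPoly n 1 (coeffOne n) = 1 := by
  rw [coeffPoly, coeffOne, Fintype.linearCombination_apply_single, one_smul]
  simp [monVec]

lemma exists_eq_apply_coeffOne_mul_eval {φ : Coeff n 1 →ₗ[ℝ] ℝ} (hφ : φ (coeffOne n) ≠ 0) :
    ∃ x : Fin n → ℝ, ∀ v, φ v = φ (coeffOne n) * eval x (coeffPoly n 1 v) := by
  refine ⟨fun j => φ (Pi.single (Sym.oneEquiv j.succ) 1) / φ (coeffOne n), fun v => ?_⟩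
  have hcoord : φ v = ∑ s, v s * φ (Pi.single s 1) := by
    conv_lhs => rw [pi_eq_sum_univ' v]
    simp only [map_sum, map_smul, smul_eq_mul]
  rw [hcoord, ← Equiv.sum_comp Sym.oneEquiv, Fin.sum_univ_succ, coeffPoly_one_apply]
  simp only [map_add, map_sum, map_mul, eval_C, eval_X, mul_add, Finset.mul_sum]
  congr 1
  · exact mul_comm _ _
  · refine Finset.sum_congr rfl fun j _ => ?_
    field_simp

lemma exists_eval_eq_zero_iff_mem {V : Submodule ℝ (Coeff n 1)} (hone : coeffOne n ∉ V)
    (hV : n ≤ Module.finrank ℝ V) :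
    ∃ x : Fin n → ℝ, ∀ v, eval x (coeffPoly n 1 v) = 0 ↔ v ∈ V := by
  obtain ⟨φ, hφ, hφV⟩ := Submodule.exists_le_ker_of_notMem hone
  obtain ⟨x, hx⟩ := exists_eq_apply_coeffOne_mul_eval hφ
  have hker : V = LinearMap.ker φ := by
    refine Submodule.eq_of_le_of_finrank_le hφV (Nat.lt_succ_iff.1 ?_)
    have hcard : Module.finrank ℝ (Coeff n 1) = n + 1 := by
      rw [Module.finrank_fintype_fun_eq_card, ← Fintype.card_congr Sym.oneEquiv, Fintype.card_fin]
    refine (Submodule.finrank_lt fun htop => hφ ?_).trans_le (hcard.trans_le (by omega))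
    rw [← LinearMap.mem_ker, htop]
    trivial
  refine ⟨x, fun v => ?_⟩
  rw [hker, LinearMap.mem_ker, hx, mul_eq_zero, or_iff_right hφ]

end Coefficients

section QuadForm

variable {n d e : ℕ}

/-- `quadFormPoly` as a linear map. -/
noncomputable def quadFormPolyLin (n d e : ℕ) :
    Matrix (Sym (Fin (n + 1)) e) (Sym (Fin (n + 1)) d) ℝ →ₗ[ℝ] MvPolynomial (Fin n) ℝ where
  toFun := quadFormPoly
  map_add' W W' := by
    simp only [quadFormPoly, Matrix.add_apply, map_add, add_mul, Finset.sum_add_distrib]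
  map_smul' r W := by
    simp only [quadFormPoly, Matrix.smul_apply, smul_eq_mul, map_mul, smul_eq_C_mul,
      Finset.mul_sum, mul_assoc, RingHom.id_apply]

lemma quadFormPolyLin_apply (W : Matrix (Sym (Fin (n + 1)) e) (Sym (Fin (n + 1)) d) ℝ) :
    quadFormPolyLin n d e W = quadFormPoly W := rfl

lemma quadFormPoly_vecMulVec (p : Coeff n e) (q : Coeff n d) :
    quadFormPoly (vecMulVec p q) = coeffPoly n e p * coeffPoly n d q := by
  simp only [quadFormPoly, coeffPoly, Fintype.linearCombination_apply, Finset.sum_mul_sum,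
    vecMulVec_apply, map_mul, smul_eq_C_mul]
  exact Finset.sum_congr rfl fun _ _ => Finset.sum_congr rfl fun _ _ => by ring

lemma quadFormPoly_transpose_mul_self {ι : Type*} [Fintype ι]
    (M : Matrix ι (Sym (Fin (n + 1)) d) ℝ) :
    quadFormPoly (Mᵀ * M) = ∑ a, coeffPoly n d (M a) ^ 2 := by
  rw [gram_eq_sum_vecMulVec, ← quadFormPolyLin_apply, map_sum]
  simp only [quadFormPolyLin_apply, quadFormPoly_vecMulVec, sq]

lemma eval_quadFormPoly (x : Fin n → ℝ)
    (W : Matrix (Sym (Fin (n + 1)) e) (Sym (Fin (n + 1)) d) ℝ) :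
    eval x (quadFormPoly W) = (eval x ∘ monVec n e) ⬝ᵥ W *ᵥ (eval x ∘ monVec n d) := by
  simp only [quadFormPoly, map_sum, map_mul, eval_C, dotProduct, mulVec, Finset.mul_sum,
    Function.comp_apply]
  exact Finset.sum_congr rfl fun _ _ => Finset.sum_congr rfl fun _ _ => by ring

/-- The polynomials `[X]₂ᵀ W [X]₁` for the matrices `W` with all rows in `V`. -/
noncomputable def cubicSpan (V : Submodule ℝ (Coeff n 1)) : Submodule ℝ (MvPolynomial (Fin n) ℝ) :=
  (Submodule.pi Set.univ fun _ => V).map (quadFormPolyLin n 1 2)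

variable {V : Submodule ℝ (Coeff n 1)}

lemma mem_cubicSpan {p : MvPolynomial (Fin n) ℝ} :
    p ∈ cubicSpan V ↔ ∃ W : Matrix (Sym (Fin (n + 1)) 2) (Sym (Fin (n + 1)) 1) ℝ,
      (∀ a, W a ∈ V) ∧ quadFormPoly W = p :=
  ⟨fun ⟨W, hW, h⟩ => ⟨W, fun a => hW a trivial, h⟩,
    fun ⟨W, hW, h⟩ => ⟨W, fun a _ => hW a, h⟩⟩

lemma mul_coeffPoly_mem_cubicSpan {p : MvPolynomial (Fin n) ℝ} (hp : p.totalDegree ≤ 2)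
    {v : Coeff n 1} (hv : v ∈ V) : p * coeffPoly n 1 v ∈ cubicSpan V := by
  obtain ⟨c, rfl⟩ := mem_range_coeffPoly hp
  exact mem_cubicSpan.2 ⟨vecMulVec c v, fun a => V.smul_mem (c a) hv, quadFormPoly_vecMulVec c v⟩

lemma coeffPoly_mem_cubicSpan {v : Coeff n 1} (hv : v ∈ V) : coeffPoly n 1 v ∈ cubicSpan V := by
  simpa using mul_coeffPoly_mem_cubicSpan (totalDegree_one.trans_le zero_le_two) hv

end QuadForm

section Pencil

variable {n m : ℕ} {A : Fin (n + 1) → Matrix (Fin m) (Fin m) ℝ}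

lemma isSymm_pencilPoly (hA : ∀ i, (A i).IsSymm) : (pencilPoly A).IsSymm :=
  IsSymm.ext fun a b => by simp only [pencilPoly, (hA _).apply a b]

lemma isSymm_pencilEval (hA : ∀ i, (A i).IsSymm) (x : Fin n → ℝ) : (pencilEval A x).IsSymm := by
  simp only [IsSymm, pencilEval, transpose_add, transpose_sum, transpose_smul, (hA _).eq]

lemma map_eval_pencilPoly (A : Fin (n + 1) → Matrix (Fin m) (Fin m) ℝ) (x : Fin n → ℝ) :
    (pencilPoly A).map (eval x) = pencilEval A x := by
  ext a b
  simp [pencilPoly, pencilEval, Matrix.sum_apply]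

lemma eval_dotProduct_pencilPoly_mulVec (x : Fin n → ℝ) (p q : Fin m → MvPolynomial (Fin n) ℝ) :
    eval x (p ⬝ᵥ pencilPoly A *ᵥ q) =
      (eval x ∘ p) ⬝ᵥ pencilEval A x *ᵥ (eval x ∘ q) := by
  rw [RingHom.map_dotProduct, ← map_eval_pencilPoly]
  congr 1
  exact funext fun i => RingHom.map_mulVec _ _ _ i

/-- The bilinear form `(u, w) ↦ uᵀ L w` of the pencil `L`, with the linear polynomial `uᵀ L w`
represented by its coefficient vector. -/
def pencilForm (A : Fin (n + 1) → Matrix (Fin m) (Fin m) ℝ) :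
    (Fin m → ℝ) →ₗ[ℝ] (Fin m → ℝ) →ₗ[ℝ] Coeff n 1 :=
  LinearMap.mk₂ ℝ (fun u w s => u ⬝ᵥ A (Sym.oneEquiv.symm s) *ᵥ w)
    (fun _ _ _ => funext fun _ => add_dotProduct _ _ _)
    (fun _ _ _ => funext fun _ => smul_dotProduct _ _ _)
    (fun _ _ _ => funext fun _ => by rw [mulVec_add, dotProduct_add, Pi.add_apply])
    (fun _ _ _ => funext fun _ => by rw [mulVec_smul, dotProduct_smul, Pi.smul_apply])

lemma pencilForm_comm (hA : ∀ i, (A i).IsSymm) (u w : Fin m → ℝ) :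
    pencilForm A u w = pencilForm A w u := funext fun s => by
  change u ⬝ᵥ A _ *ᵥ w = w ⬝ᵥ A _ *ᵥ u
  rw [dotProduct_mulVec, ← mulVec_transpose, (hA _).eq, dotProduct_comm]

lemma coeffPoly_pencilForm (u w : Fin m → ℝ) :
    coeffPoly n 1 (pencilForm A u w) = (C ∘ u) ⬝ᵥ pencilPoly A *ᵥ (C ∘ w) := by
  have hpencil : pencilPoly A = (A 0).map C + ∑ j, (X j : MvPolynomial (Fin n) ℝ) •
      (A j.succ).map C := by
    ext a b : 2
    simp [pencilPoly, Matrix.sum_apply]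
  have hC : ∀ M : Matrix (Fin m) (Fin m) ℝ,
      (C (u ⬝ᵥ M *ᵥ w) : MvPolynomial (Fin n) ℝ) = (C ∘ u) ⬝ᵥ M.map C *ᵥ (C ∘ w) := fun M => by
    rw [RingHom.map_dotProduct]
    congr 1
    exact funext fun i => RingHom.map_mulVec _ _ _ i
  rw [coeffPoly_one_apply, hpencil, add_mulVec, dotProduct_add, sum_mulVec, dotProduct_sum]
  simp only [pencilForm, LinearMap.mk₂_apply, Equiv.symm_apply_apply, hC, smul_mulVec,
    dotProduct_smul, smul_eq_mul]

lemma eval_coeffPoly_pencilForm (x : Fin n → ℝ) (u w : Fin m → ℝ) :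
    eval x (coeffPoly n 1 (pencilForm A u w)) = u ⬝ᵥ pencilEval A x *ᵥ w := by
  rw [coeffPoly_pencilForm, eval_dotProduct_pencilPoly_mulVec]
  simp only [Function.comp_def, eval_C]

lemma mem_specSet_iff (hA : ∀ i, (A i).IsSymm) {x : Fin n → ℝ} :
    x ∈ specSet A ↔ ∀ u, 0 ≤ eval x (coeffPoly n 1 (pencilForm A u u)) := by
  simp only [specSet, Set.mem_ofPred_eq, posSemidef_iff_dotProduct_mulVec, star_trivial,
    eval_coeffPoly_pencilForm, and_iff_right_iff_imp]
  exact fun _ => by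
    rw [IsHermitian, conjTranspose_eq_transpose_of_trivial, (isSymm_pencilEval hA x).eq]

lemma coeffPoly_sum_pencilForm {ι : Type*} [Fintype ι] (U : Matrix ι (Fin m) ℝ) :
    coeffPoly n 1 (∑ i, pencilForm A (U i) (U i)) = (pencilPoly A * (Uᵀ * U).map C).trace := by
  rw [Matrix.map_mul, transpose_map, trace_mul_transpose_mul, map_sum]
  exact Finset.sum_congr rfl fun i _ => coeffPoly_pencilForm _ _

end Pencil

section SosMatrix

variable {n m : ℕ}

/-- A quadratic sos-matrix: an sos-matrix all of whose entries have degree at most `2`. -/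
def IsQuadraticSos (S : Matrix (Fin m) (Fin m) (MvPolynomial (Fin n) ℝ)) : Prop :=
  IsSosMatrix S ∧ ∀ a b, (S a b).totalDegree ≤ 2

lemma isSosMatrix_map_C {S : Matrix (Fin m) (Fin m) ℝ} (hS : S.PosSemidef) :
    IsSosMatrix (S.map (C : ℝ →+* MvPolynomial (Fin n) ℝ)) := by
  obtain ⟨r, P, rfl⟩ := exists_eq_transpose_mul_self_of_posSemidef hS
  exact ⟨r, P.map C, by rw [Matrix.map_mul, transpose_map]⟩

lemma IsSosMatrix.eval_trace_nonneg {A : Fin (n + 1) → Matrix (Fin m) (Fin m) ℝ}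
    {S : Matrix (Fin m) (Fin m) (MvPolynomial (Fin n) ℝ)} (hS : IsSosMatrix S) {x : Fin n → ℝ}
    (hx : x ∈ specSet A) : 0 ≤ eval x (pencilPoly A * S).trace := by
  obtain ⟨s, P, rfl⟩ := hS
  rw [trace_mul_transpose_mul, map_sum]
  refine Finset.sum_nonneg fun i _ => ?_
  rw [eval_dotProduct_pencilPoly_mulVec]
  exact PosSemidef.dotProduct_mulVec_nonneg hx _

lemma isQuadraticSos_transpose_mul_self {s : ℕ}
    {P : Matrix (Fin s) (Fin m) (MvPolynomial (Fin n) ℝ)}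
    (hP : ∀ i a, (P i a).totalDegree ≤ 1) : IsQuadraticSos (Pᵀ * P) :=
  ⟨⟨s, P, rfl⟩, fun a b => totalDegree_finsetSum_le fun i _ =>
    (totalDegree_mul _ _).trans (add_le_add (hP i a) (hP i b))⟩

lemma isQuadraticSos_zero :
    IsQuadraticSos (0 : Matrix (Fin m) (Fin m) (MvPolynomial (Fin n) ℝ)) :=
  ⟨⟨0, 0, by simp⟩, by simp⟩

lemma IsQuadraticSos.smul {S : Matrix (Fin m) (Fin m) (MvPolynomial (Fin n) ℝ)}
    (hS : IsQuadraticSos S) {t : ℝ} (ht : 0 ≤ t) : IsQuadraticSos (t • S) := by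
  obtain ⟨⟨s, P, rfl⟩, hdeg⟩ := hS
  refine ⟨⟨s, √t • P, ?_⟩, fun a b => (totalDegree_smul_le _ _).trans (hdeg a b)⟩
  rw [transpose_smul, Matrix.smul_mul, Matrix.mul_smul, smul_smul, Real.mul_self_sqrt ht]

end SosMatrix

section ForcedZero

variable {n m : ℕ} {A : Fin (n + 1) → Matrix (Fin m) (Fin m) ℝ} {V : Submodule ℝ (Coeff n 1)}

/-- An algebraic certificate that the linear polynomial `ℓ` vanishes on the points of the
spectrahedron where all of `V` vanishes: modulo polynomials vanishing there, `-ℓ²` is `tr (L S)`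
for a quadratic sos-matrix `S`. -/
def IsForcedZero (A : Fin (n + 1) → Matrix (Fin m) (Fin m) ℝ) (V : Submodule ℝ (Coeff n 1))
    (ℓ : Coeff n 1) : Prop :=
  ∃ S, IsQuadraticSos S ∧ coeffPoly n 1 ℓ ^ 2 + (pencilPoly A * S).trace ∈ cubicSpan V

lemma isForcedZero_zero : IsForcedZero A V 0 :=
  ⟨0, isQuadraticSos_zero, by simp⟩

lemma isForcedZero_coeffOne {r : ℕ} {U : Matrix (Fin r) (Fin m) ℝ} {c : ℝ} (hc : 0 < c)
    (hU : c • coeffOne n + ∑ i, pencilForm A (U i) (U i) ∈ V) :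
    IsForcedZero A V (coeffOne n) := by
  have hsos : IsQuadraticSos (((Uᵀ * U).map C : Matrix _ _ (MvPolynomial (Fin n) ℝ))) := by
    rw [Matrix.map_mul, transpose_map]
    exact isQuadraticSos_transpose_mul_self fun i a => by simp
  refine ⟨_, hsos.smul (inv_nonneg.2 hc.le), ?_⟩
  have hmem := coeffPoly_mem_cubicSpan (V.smul_mem c⁻¹ hU)
  rwa [smul_add, inv_smul_smul₀ hc.ne', map_add, map_smul, coeffPoly_coeffOne,
    coeffPoly_sum_pencilForm, ← trace_smul, ← Matrix.mul_smul, ← one_pow 2,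
    ← coeffPoly_coeffOne n] at hmem

/- The sos-matrix is `Pᵀ P`, where the rows of `P` are the `p u_i`, with `l w` added to the `k`-th
one. The cross term contributes `2 p l²` and the new square `l² (wᵀ L w)` to `tr (L Pᵀ P)`; the
choice of `p` makes them add up to `-l²`. -/
lemma isForcedZero_pencilForm (hA : ∀ i, (A i).IsSymm) {r : ℕ} {U : Matrix (Fin r) (Fin m) ℝ}
    (hU : ∑ i, pencilForm A (U i) (U i) ∈ V) (k : Fin r) (w : Fin m → ℝ) :
    IsForcedZero A V (pencilForm A (U k) w) := by
  set l := coeffPoly n 1 (pencilForm A (U k) w) with hl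
  set q := coeffPoly n 1 (pencilForm A w w) with hq
  obtain ⟨p, hpdeg, hp⟩ : ∃ p : MvPolynomial (Fin n) ℝ, p.totalDegree ≤ 1 ∧ 2 * p = -(1 + q) := by
    refine ⟨coeffPoly n 1 ((-1 / 2 : ℝ) • (coeffOne n + pencilForm A w w)),
      totalDegree_coeffPoly_le _, ?_⟩
    rw [map_smul, map_add, coeffPoly_coeffOne, ← hq, two_mul, ← add_smul,
      show (-1 / 2 + -1 / 2 : ℝ) = -1 by norm_num, neg_one_smul]
  have hldeg : l.totalDegree ≤ 1 := totalDegree_coeffPoly_le _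
  let P : Matrix (Fin r) (Fin m) (MvPolynomial (Fin n) ℝ) :=
    p • U.map C + of (Pi.single k (l • (C ∘ w)))
  refine ⟨Pᵀ * P, isQuadraticSos_transpose_mul_self fun i a => ?_, ?_⟩
  · have hmulC : ∀ (g : MvPolynomial (Fin n) ℝ) (t : ℝ), g.totalDegree ≤ 1 →
        (g * C t).totalDegree ≤ 1 := fun g t hg =>
      (totalDegree_mul _ _).trans (by rwa [totalDegree_C, add_zero])
    refine (totalDegree_add _ _).trans (max_le (hmulC _ _ hpdeg) ?_)
    rw [of_apply]
    by_cases hi : i = k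
    · subst hi
      rw [Pi.single_eq_same]
      exact hmulC _ _ hldeg
    · simp [Pi.single_eq_of_ne hi]
  · convert mul_coeffPoly_mem_cubicSpan (p := p ^ 2)
      ((totalDegree_pow _ _).trans (Nat.mul_le_mul_left 2 hpdeg)) hU using 1
    have hcross : (C ∘ w) ⬝ᵥ pencilPoly A *ᵥ (U.map C) k = l := by
      rw [hl, pencilForm_comm hA, coeffPoly_pencilForm]
      rfl
    rw [trace_mul_gram_smul_add_single (isSymm_pencilPoly hA) (U.map C) p l k _ rfl, hcross,
      ← coeffPoly_pencilForm, coeffPoly_sum_pencilForm, Matrix.map_mul, transpose_map]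
    linear_combination l ^ 2 * hp

end ForcedZero

section DualChain

variable {n m k : ℕ} {A : Fin (n + 1) → Matrix (Fin m) (Fin m) ℝ}

/-- The matrices `S₁, …, S_k`, `U₁, …, U_k` and `W₀, …, W_k` satisfy conditions (1) and (2) of the
sums of squares dual, for an arbitrary length `k`. -/
structure IsDualChain (A : Fin (n + 1) → Matrix (Fin m) (Fin m) ℝ)
    (S : Fin k → Matrix (Fin m) (Fin m) (MvPolynomial (Fin n) ℝ))
    (U : Fin k → Matrix (Sym (Fin (n + 1)) 1) (Sym (Fin (n + 1)) 1) ℝ)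
    (W : Fin (k + 1) → Matrix (Sym (Fin (n + 1)) 2) (Sym (Fin (n + 1)) 1) ℝ) : Prop where
  zero : W 0 = 0
  quadraticSos : ∀ i, IsQuadraticSos (S i)
  symm : ∀ i, (U i).IsSymm
  eq_zero : ∀ i,
    quadFormPoly (U i) + quadFormPoly (W i.castSucc) + (pencilPoly A * S i).trace = 0
  posSemidef : ∀ i, (U i - (W i.succ)ᵀ * W i.succ).PosSemidef

/-- Some chain of length `k` ends with the matrix `W'`. -/
def HasDualChain (A : Fin (n + 1) → Matrix (Fin m) (Fin m) ℝ) (k : ℕ)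
    (W' : Matrix (Sym (Fin (n + 1)) 2) (Sym (Fin (n + 1)) 1) ℝ) : Prop :=
  ∃ (S : Fin k → Matrix (Fin m) (Fin m) (MvPolynomial (Fin n) ℝ))
    (U : Fin k → Matrix (Sym (Fin (n + 1)) 1) (Sym (Fin (n + 1)) 1) ℝ)
    (W : Fin (k + 1) → Matrix (Sym (Fin (n + 1)) 2) (Sym (Fin (n + 1)) 1) ℝ),
    IsDualChain A S U W ∧ W (Fin.last k) = W'

lemma hasDualChain_zero : HasDualChain A 0 0 :=
  ⟨Fin.elim0, Fin.elim0, 0, ⟨rfl, nofun, nofun, nofun, nofun⟩, rfl⟩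

lemma HasDualChain.succ {W W' : Matrix (Sym (Fin (n + 1)) 2) (Sym (Fin (n + 1)) 1) ℝ}
    (h : HasDualChain A k W) {S : Matrix (Fin m) (Fin m) (MvPolynomial (Fin n) ℝ)}
    {U : Matrix (Sym (Fin (n + 1)) 1) (Sym (Fin (n + 1)) 1) ℝ} (hS : IsQuadraticSos S)
    (hU : U.IsSymm) (heq : quadFormPoly U + quadFormPoly W + (pencilPoly A * S).trace = 0)
    (hpsd : (U - W'ᵀ * W').PosSemidef) : HasDualChain A (k + 1) W' := by
  obtain ⟨S₁, U₁, W₁, h₁, rfl⟩ := h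
  refine ⟨Fin.snoc (α := fun _ => _) S₁ S, Fin.snoc (α := fun _ => _) U₁ U,
    Fin.snoc (α := fun _ => _) W₁ W', ⟨?_, ?_, ?_, ?_, ?_⟩, Fin.snoc_last _ _⟩
  · rw [← Fin.castSucc_zero, Fin.snoc_castSucc, h₁.zero]
  · exact Fin.lastCases (by simpa using hS) (by simpa using h₁.quadraticSos)
  · exact Fin.lastCases (by simpa using hU) (by simpa using h₁.symm)
  · refine Fin.lastCases ?_ fun i => ?_
    · simpa only [Fin.snoc_last, Fin.snoc_castSucc] using heq
    · simpa only [Fin.snoc_castSucc] using h₁.eq_zero i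
  · refine Fin.lastCases ?_ fun i => ?_
    · simpa only [Fin.snoc_last, Fin.succ_last] using hpsd
    · simpa only [Fin.snoc_castSucc, Fin.succ_castSucc] using h₁.posSemidef i

lemma IsDualChain.mulVec_eq_zero {S : Fin k → Matrix (Fin m) (Fin m) (MvPolynomial (Fin n) ℝ)}
    {U : Fin k → Matrix (Sym (Fin (n + 1)) 1) (Sym (Fin (n + 1)) 1) ℝ}
    {W : Fin (k + 1) → Matrix (Sym (Fin (n + 1)) 2) (Sym (Fin (n + 1)) 1) ℝ}
    (h : IsDualChain A S U W) {x : Fin n → ℝ} (hx : x ∈ specSet A) (i : Fin (k + 1)) :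
    W i *ᵥ (eval x ∘ monVec n 1) = 0 := by
  induction i using Fin.induction with
  | zero => rw [h.zero, zero_mulVec]
  | succ i ih =>
    refine mulVec_eq_zero_of_posSemidef_sub_gram (h.posSemidef i) ?_
    have heq := congrArg (eval x) (h.eq_zero i)
    rw [map_add, map_add, eval_quadFormPoly, eval_quadFormPoly, ih, dotProduct_zero, add_zero,
      map_zero] at heq
    linarith [(h.quadraticSos i).1.eval_trace_nonneg hx]

lemma IsDualChain.eval_nonneg {S : Fin k → Matrix (Fin m) (Fin m) (MvPolynomial (Fin n) ℝ)}
    {U : Fin k → Matrix (Sym (Fin (n + 1)) 1) (Sym (Fin (n + 1)) 1) ℝ}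
    {W : Fin (k + 1) → Matrix (Sym (Fin (n + 1)) 2) (Sym (Fin (n + 1)) 1) ℝ}
    (h : IsDualChain A S U W) {f : MvPolynomial (Fin n) ℝ} {S₀ : Matrix (Fin m) (Fin m) ℝ} {c : ℝ}
    (hS₀ : S₀.PosSemidef) (hc : 0 ≤ c)
    (hf : f - C c + quadFormPoly (W (Fin.last k)) - (pencilPoly A * S₀.map C).trace = 0)
    {x : Fin n → ℝ} (hx : x ∈ specSet A) : 0 ≤ eval x f := by
  have heq := congrArg (eval x) hf
  rw [map_sub, map_add, map_sub, eval_quadFormPoly, h.mulVec_eq_zero hx, dotProduct_zero, eval_C,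
    map_zero] at heq
  linarith [(isSosMatrix_map_C hS₀).eval_trace_nonneg hx]

end DualChain

section Reachable

variable {n m k : ℕ} {A : Fin (n + 1) → Matrix (Fin m) (Fin m) ℝ} {V : Submodule ℝ (Coeff n 1)}

/-- Every matrix with rows in `V` is the last matrix of a chain of length `k`. -/
def IsReachable (A : Fin (n + 1) → Matrix (Fin m) (Fin m) ℝ) (k : ℕ)
    (V : Submodule ℝ (Coeff n 1)) : Prop :=
  ∀ W : Matrix (Sym (Fin (n + 1)) 2) (Sym (Fin (n + 1)) 1) ℝ, (∀ a, W a ∈ V) → HasDualChain A k W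

lemma isReachable_bot : IsReachable A 0 ⊥ := fun W hW => by
  obtain rfl : W = 0 := funext fun a => (Submodule.mem_bot ℝ).1 (hW a)
  exact hasDualChain_zero

lemma quadFormPoly_gram_mem_cubicSpan {ι : Type*} [Fintype ι]
    {M : Matrix ι (Sym (Fin (n + 1)) 1) ℝ} (hM : ∀ a, M a ∈ V) :
    quadFormPoly (Mᵀ * M) ∈ cubicSpan V := by
  rw [quadFormPoly_transpose_mul_self]
  refine Submodule.sum_mem _ fun a _ => ?_
  rw [sq]
  exact mul_coeffPoly_mem_cubicSpan ((totalDegree_coeffPoly_le _).trans one_le_two) (hM a)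

lemma quadFormPoly_gram_vecMulVec {ι : Type*} [Fintype ι] (t : ι → ℝ) (ℓ : Coeff n 1) :
    quadFormPoly ((vecMulVec t ℓ)ᵀ * vecMulVec t ℓ) = (∑ a, t a ^ 2) • coeffPoly n 1 ℓ ^ 2 := by
  rw [quadFormPoly_transpose_mul_self, Finset.sum_smul]
  refine Finset.sum_congr rfl fun a _ => ?_
  rw [show vecMulVec t ℓ a = t a • ℓ from rfl, map_smul, smul_pow]

/- A matrix with rows in `V + ℝ ℓ` is `M + t ℓᵀ` with the rows of `M` in `V`, and its Gram matrix
is dominated by `2 (Mᵀ M + (t ℓᵀ)ᵀ (t ℓᵀ))`, whose second summand `2 ‖t‖² ℓ²` is cancelled by a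
multiple of the certificate for `ℓ`. -/
lemma IsReachable.sup_span_singleton (hV : IsReachable A k V) {ℓ : Coeff n 1}
    (hℓ : IsForcedZero A V ℓ) : IsReachable A (k + 1) (V ⊔ Submodule.span ℝ {ℓ}) := by
  intro W' hW'
  obtain ⟨M, t, hM, rfl⟩ := exists_eq_add_vecMulVec hW'
  obtain ⟨S, hS, hmem⟩ := hℓ
  set N := vecMulVec t ℓ with hN
  set τ : ℝ := ∑ a, t a ^ 2
  have hτ : 0 ≤ 2 * τ := by positivity
  have hcubic : quadFormPoly (2 • (Mᵀ * M + Nᵀ * N)) + (pencilPoly A * ((2 * τ) • S)).trace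
      ∈ cubicSpan V := by
    have hsum := add_mem (nsmul_mem (quadFormPoly_gram_mem_cubicSpan hM) 2)
      (Submodule.smul_mem _ (2 * τ) hmem)
    have hU : quadFormPoly (2 • (Mᵀ * M + Nᵀ * N)) =
        2 • quadFormPoly (Mᵀ * M) + (2 * τ) • coeffPoly n 1 ℓ ^ 2 := by
      rw [← quadFormPolyLin_apply, map_nsmul, map_add, quadFormPolyLin_apply,
        quadFormPolyLin_apply, hN, quadFormPoly_gram_vecMulVec, smul_add, mul_smul, two_smul ℝ,
        two_nsmul (τ • _)]
    rwa [hU, Matrix.mul_smul, trace_smul, add_assoc, ← smul_add]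
  obtain ⟨W, hW, hWeq⟩ := mem_cubicSpan.1 (neg_mem hcubic)
  refine (hV W hW).succ (hS.smul hτ) (U := 2 • (Mᵀ * M + Nᵀ * N)) ?_ ?_ ?_
  · simp only [IsSymm, transpose_smul, transpose_add, transpose_mul, transpose_transpose]
  · rw [hWeq]
    abel
  · rw [two_nsmul_gram_add_gram_sub_gram_add, ← conjTranspose_eq_transpose_of_trivial]
    exact posSemidef_conjTranspose_mul_self _

lemma IsReachable.mono_length (hV : IsReachable A k V) : IsReachable A (k + 1) V := by
  simpa using hV.sup_span_singleton isForcedZero_zero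

end Reachable

section Certification

variable {n m : ℕ} {A : Fin (n + 1) → Matrix (Fin m) (Fin m) ℝ} {f : Coeff n 1}
  {V : Submodule ℝ (Coeff n 1)}

/-- Condition (3) of the sums of squares dual holds for `f` and some `Wₙ` with all rows in `V`. -/
def IsCertified (A : Fin (n + 1) → Matrix (Fin m) (Fin m) ℝ) (f : Coeff n 1)
    (V : Submodule ℝ (Coeff n 1)) : Prop :=
  ∃ (S : Matrix (Fin m) (Fin m) ℝ) (c : ℝ), S.PosSemidef ∧ 0 ≤ c ∧
    coeffPoly n 1 f - C c - (pencilPoly A * S.map C).trace ∈ cubicSpan V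

lemma isCertified_of_coeffOne_mem (hone : coeffOne n ∈ V) : IsCertified A f V := by
  refine ⟨0, 0, .zero, le_rfl, ?_⟩
  simpa [coeffPoly_coeffOne] using
    mul_coeffPoly_mem_cubicSpan ((totalDegree_coeffPoly_le f).trans one_le_two) hone

lemma isCertified_of_sub_smul_mem {r : ℕ} {U : Matrix (Fin r) (Fin m) ℝ} {c t : ℝ} (hc : 0 ≤ c)
    (ht : 0 < t) (h : c • coeffOne n + ∑ i, pencilForm A (U i) (U i) - t • f ∈ V) :
    IsCertified A f V := by
  refine ⟨t⁻¹ • (Uᵀ * U), t⁻¹ * c, ?_, by positivity, ?_⟩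
  · rw [← conjTranspose_eq_transpose_of_trivial]
    exact (posSemidef_conjTranspose_mul_self U).smul (inv_nonneg.2 ht.le)
  · have hmem := coeffPoly_mem_cubicSpan (V.smul_mem (-t⁻¹) h)
    have htrace : (pencilPoly A * (t⁻¹ • (Uᵀ * U)).map C).trace =
        t⁻¹ • coeffPoly n 1 (∑ i, pencilForm A (U i) (U i)) := by
      rw [Matrix.map_smul _ _ fun _ => by rw [smul_eq_mul, C_mul, smul_eq_C_mul], Matrix.mul_smul,
        trace_smul, coeffPoly_sum_pencilForm]
    have hconst : C (t⁻¹ * c) = (t⁻¹ * c) • coeffPoly n 1 (coeffOne n) := by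
      rw [coeffPoly_coeffOne, smul_eq_C_mul, mul_one]
    rw [htrace, hconst, ← map_smul, ← map_smul, ← map_sub, ← map_sub]
    convert hmem using 2
    rw [smul_sub, smul_smul, neg_mul, inv_mul_cancel₀ ht.ne']
    module

lemma isCertified_of_le_finrank (hA : ∀ i, (A i).IsSymm)
    (hf : ∀ x ∈ specSet A, 0 ≤ eval x (coeffPoly n 1 f)) (hV : n ≤ Module.finrank ℝ V) :
    IsCertified A f V := by
  by_cases hone : coeffOne n ∈ V
  · exact isCertified_of_coeffOne_mem hone
  obtain ⟨x, hx⟩ := exists_eval_eq_zero_iff_mem hone hV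
  rcases le_or_gt 0 (eval x (coeffPoly n 1 f)) with hfx | hfx
  · refine isCertified_of_sub_smul_mem (U := ![]) hfx one_pos ((hx _).1 ?_)
    simp [coeffPoly_coeffOne]
  · obtain ⟨u, hu⟩ : ∃ u, eval x (coeffPoly n 1 (pencilForm A u u)) < 0 := by
      by_contra! hu
      exact hfx.not_ge (hf x ((mem_specSet_iff hA).2 hu))
    refine isCertified_of_sub_smul_mem (U := ![u]) le_rfl (div_pos_of_neg_of_neg hu hfx)
      ((hx _).1 ?_)
    simp [hfx.ne]

end Certification

section Step

variable {n m : ℕ} {A : Fin (n + 1) → Matrix (Fin m) (Fin m) ℝ} {f : Coeff n 1}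

lemma exists_mem_specSet_eq_apply_coeffOne_mul_eval (hA : ∀ i, (A i).IsSymm) {φ : Coeff n 1 →ₗ[ℝ] ℝ}
    (hone : 0 < φ (coeffOne n)) (hφ : ∀ u, 0 ≤ φ (pencilForm A u u)) :
    ∃ x ∈ specSet A, ∀ v, φ v = φ (coeffOne n) * eval x (coeffPoly n 1 v) := by
  obtain ⟨x, hx⟩ := exists_eq_apply_coeffOne_mul_eval hone.ne'
  refine ⟨x, (mem_specSet_iff hA).2 fun u => ?_, hx⟩
  exact nonneg_of_mul_nonneg_right (hx _ ▸ hφ u) hone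

/-- The form `uᵀ L w` extended by the diagonal entries `1` and `-f`. A functional that is
nonnegative on its squares and positive on `1` and `-f` is, up to scaling, the evaluation at a
point of the spectrahedron where `f` is negative. The three coordinates carry `-f`, `1` and `u`. -/
noncomputable def augmentedForm (A : Fin (n + 1) → Matrix (Fin m) (Fin m) ℝ) (f : Coeff n 1) :
    (ℝ × ℝ × (Fin m → ℝ)) →ₗ[ℝ] (ℝ × ℝ × (Fin m → ℝ)) →ₗ[ℝ] Coeff n 1 :=
  LinearMap.mk₂ ℝ (fun x y =>
      (x.2.1 * y.2.1) • coeffOne n + pencilForm A x.2.2 y.2.2 - (x.1 * y.1) • f)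
    (fun x x' y => by
      simp only [Prod.fst_add, Prod.snd_add, map_add, LinearMap.add_apply]; module)
    (fun c x y => by
      simp only [Prod.smul_fst, Prod.smul_snd, map_smul, LinearMap.smul_apply, smul_eq_mul]; module)
    (fun x y y' => by
      simp only [Prod.fst_add, Prod.snd_add, map_add]; module)
    (fun c x y => by
      simp only [Prod.smul_fst, Prod.smul_snd, map_smul, smul_eq_mul]; module)

lemma augmentedForm_apply (x y : ℝ × ℝ × (Fin m → ℝ)) :
    augmentedForm A f x y =
      (x.2.1 * y.2.1) • coeffOne n + pencilForm A x.2.2 y.2.2 - (x.1 * y.1) • f := rfl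

lemma augmentedForm_comm (hA : ∀ i, (A i).IsSymm) (x y : ℝ × ℝ × (Fin m → ℝ)) :
    augmentedForm A f x y = augmentedForm A f y x := by
  rw [augmentedForm_apply, augmentedForm_apply, pencilForm_comm hA, mul_comm x.1, mul_comm x.2.1]

lemma exists_sum_augmentedForm_mem (hA : ∀ i, (A i).IsSymm)
    (hf : ∀ x ∈ specSet A, 0 ≤ eval x (coeffPoly n 1 f)) {V : Submodule ℝ (Coeff n 1)}
    (hone : coeffOne n ∉ V) (hfV : f ∉ V) :
    ∃ (r : ℕ) (z : Fin r → ℝ × ℝ × (Fin m → ℝ)),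
      (∃ i y, augmentedForm A f (z i) y ∉ V) ∧ ∑ i, augmentedForm A f (z i) (z i) ∈ V := by
  refine (exists_posSemidef_or_exists_sum_mem (augmentedForm_comm hA) V).resolve_left ?_
  rintro ⟨φ, -, hφ, hpos⟩
  have hφone : 0 < φ (coeffOne n) := by
    simpa [augmentedForm_apply, hone] using hpos (0, 1, 0) (0, 1, 0)
  have hφf : φ f < 0 := by
    simpa [augmentedForm_apply, hfV] using hpos (1, 0, 0) (1, 0, 0)
  obtain ⟨x, hx, hφx⟩ := exists_mem_specSet_eq_apply_coeffOne_mul_eval hA hφone fun u => by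
    simpa [augmentedForm_apply] using hφ (0, 0, u)
  exact hφf.not_ge (hφx f ▸ mul_nonneg hφone.le (hf x hx))

lemma isCertified_or_exists_isForcedZero (hA : ∀ i, (A i).IsSymm)
    (hf : ∀ x ∈ specSet A, 0 ≤ eval x (coeffPoly n 1 f)) (V : Submodule ℝ (Coeff n 1)) :
    IsCertified A f V ∨ ∃ ℓ ∉ V, IsForcedZero A V ℓ := by
  by_cases hone : coeffOne n ∈ V
  · exact Or.inl (isCertified_of_coeffOne_mem hone)
  by_cases hfV : f ∈ V
  · exact Or.inl (isCertified_of_sub_smul_mem (U := ![]) le_rfl one_pos (by simpa using hfV))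
  obtain ⟨r, z, ⟨k, y, hky⟩, hmem⟩ := exists_sum_augmentedForm_mem hA hf hone hfV
  let U : Matrix (Fin r) (Fin m) ℝ := of fun i => (z i).2.2
  have hsum : (∑ i, (z i).2.1 * (z i).2.1) • coeffOne n + ∑ i, pencilForm A (U i) (U i) -
      (∑ i, (z i).1 * (z i).1) • f ∈ V := by
    simp only [augmentedForm_apply, Finset.sum_sub_distrib, Finset.sum_add_distrib,
      ← Finset.sum_smul] at hmem
    exact hmem
  have hc : 0 ≤ ∑ i, (z i).2.1 * (z i).2.1 := Finset.sum_nonneg fun _ _ => mul_self_nonneg _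
  have ht : 0 ≤ ∑ i, (z i).1 * (z i).1 := Finset.sum_nonneg fun _ _ => mul_self_nonneg _
  rcases ht.eq_or_lt' with ht | ht
  · rw [ht, zero_smul, sub_zero] at hsum
    right
    rcases hc.eq_or_lt' with hc | hc
    · rw [hc, zero_smul, zero_add] at hsum
      have hzero : (z k).1 = 0 ∧ (z k).2.1 = 0 := by
        rw [Finset.sum_mul_self_eq_zero_iff] at ht hc
        exact ⟨ht k (Finset.mem_univ k), hc k (Finset.mem_univ k)⟩
      rw [augmentedForm_apply, hzero.1, hzero.2, zero_mul, zero_mul, zero_smul, zero_smul,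
        zero_add, sub_zero] at hky
      exact ⟨_, hky, isForcedZero_pencilForm hA hsum k _⟩
    · exact ⟨_, hone, isForcedZero_coeffOne hc hsum⟩
  · exact Or.inl (isCertified_of_sub_smul_mem hc ht hsum)

lemma exists_isReachable (hA : ∀ i, (A i).IsSymm)
    (hf : ∀ x ∈ specSet A, 0 ≤ eval x (coeffPoly n 1 f)) (k : ℕ) :
    ∃ V, IsReachable A k V ∧ (IsCertified A f V ∨ k ≤ Module.finrank ℝ V) := by
  induction k with
  | zero => exact ⟨⊥, isReachable_bot, Or.inr (Nat.zero_le _)⟩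
  | succ k ih =>
    obtain ⟨V, hV, hcert | hk⟩ := ih
    · exact ⟨V, hV.mono_length, Or.inl hcert⟩
    obtain hcert | ⟨ℓ, hℓ, hforced⟩ := isCertified_or_exists_isForcedZero hA hf V
    · exact ⟨V, hV.mono_length, Or.inl hcert⟩
    · refine ⟨_, hV.sup_span_singleton hforced, Or.inr (hk.trans_lt ?_)⟩
      refine Submodule.finrank_lt_finrank_of_lt (left_lt_sup.2 ?_)
      rwa [Submodule.span_singleton_le_iff_mem]

lemma exists_isDualChain_of_nonneg (hA : ∀ i, (A i).IsSymm)
    (hf : ∀ x ∈ specSet A, 0 ≤ eval x (coeffPoly n 1 f)) :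
    ∃ (S : Fin n → Matrix (Fin m) (Fin m) (MvPolynomial (Fin n) ℝ))
      (U : Fin n → Matrix (Sym (Fin (n + 1)) 1) (Sym (Fin (n + 1)) 1) ℝ)
      (W : Fin (n + 1) → Matrix (Sym (Fin (n + 1)) 2) (Sym (Fin (n + 1)) 1) ℝ)
      (S₀ : Matrix (Fin m) (Fin m) ℝ) (c : ℝ), IsDualChain A S U W ∧ S₀.PosSemidef ∧ 0 ≤ c ∧
        coeffPoly n 1 f - C c + quadFormPoly (W (Fin.last n)) -
          (pencilPoly A * S₀.map C).trace = 0 := by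
  obtain ⟨V, hV, hcert⟩ := exists_isReachable hA hf n
  obtain ⟨S₀, c, hS₀, hc, hmem⟩ := hcert.elim id (isCertified_of_le_finrank hA hf)
  obtain ⟨W', hW', hW'eq⟩ := mem_cubicSpan.1 (neg_mem hmem)
  obtain ⟨S, U, W, hchain, rfl⟩ := hV W' hW'
  refine ⟨S, U, W, S₀, c, hchain, hS₀, hc, ?_⟩
  rw [hW'eq]
  ring

end Step

/-- **Sums of squares SDP duality.** A linear polynomial `f` is nonnegative on `S_L` iff
there are quadratic sos-matrices `S₁, …, Sₙ`, symmetric matrices `U₁, …, Uₙ` of size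
`s(1)`, matrices `W₁, …, Wₙ` of size `s(2) × s(1)`, a positive semidefinite matrix `S`
and `c ≥ 0` such that (with `W₀ := 0`): `[X]₁ᵀ Uᵢ [X]₁ + [X]₂ᵀ W_{i-1} [X]₁ + tr(L Sᵢ) = 0`
and `Uᵢ ⪰ WᵢᵀWᵢ` for all `i`, and `f - c + [X]₂ᵀ Wₙ [X]₁ - tr(L S) = 0`. -/
theorem sums_of_squares_SDP_duality
    (n m : ℕ) (A : Fin (n+1) → Matrix (Fin m) (Fin m) ℝ)
    (hsymm : ∀ i, (A i).IsSymm)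
    (f : MvPolynomial (Fin n) ℝ) (hf : f.totalDegree ≤ 1) :
    (∀ x ∈ specSet A, 0 ≤ MvPolynomial.eval x f) ↔
      ∃ (S : Fin n → Matrix (Fin m) (Fin m) (MvPolynomial (Fin n) ℝ))
        (U : Fin n → Matrix (Sym (Fin (n+1)) 1) (Sym (Fin (n+1)) 1) ℝ)
        (W : Fin (n+1) → Matrix (Sym (Fin (n+1)) 2) (Sym (Fin (n+1)) 1) ℝ)
        (S₀ : Matrix (Fin m) (Fin m) ℝ) (c : ℝ),
        W 0 = 0 ∧
        (∀ i, IsSosMatrix (S i)) ∧ (∀ i a b, (S i a b).totalDegree ≤ 2) ∧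
        (∀ i, (U i).IsSymm) ∧
        S₀.PosSemidef ∧ 0 ≤ c ∧
        (∀ i : Fin n,
          quadFormPoly (U i) + quadFormPoly (W i.castSucc) +
              (pencilPoly A * S i).trace = 0) ∧
        (∀ i : Fin n, (U i - (W i.succ)ᵀ * W i.succ).PosSemidef) ∧
        f - MvPolynomial.C c + quadFormPoly (W (Fin.last n)) -
            (pencilPoly A * S₀.map MvPolynomial.C).trace = 0 := by
  constructor
  · intro hpos
    obtain ⟨f, rfl⟩ := mem_range_coeffPoly hf
    obtain ⟨S, U, W, S₀, c, h, hS₀, hc, hfin⟩ := exists_isDualChain_of_nonneg hsymm hpos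
    exact ⟨S, U, W, S₀, c, h.zero, fun i => (h.quadraticSos i).1, fun i => (h.quadraticSos i).2,
      h.symm, hS₀, hc, h.eq_zero, h.posSemidef, hfin⟩
  · rintro ⟨S, U, W, S₀, c, hzero, hS, hdeg, hU, hS₀, hc, heq, hpsd, hfin⟩ x hx
    have h : IsDualChain A S U W := ⟨hzero, fun i => ⟨hS i, hdeg i⟩, hU, heq, hpsd⟩
    exact h.eval_nonneg hS₀ hc hfin hx
end

section
/- Let L be a linear pencil of size m in n variables. Then for every linear polynomial f ∈ ℝ[X₁,…,Xₙ]₁: f ≥ 0 on S_L if and only if f ∈ C_L + √(supp M_L), where √(supp M_L) denotes the radical of the ideal supp M_L = M_L ∩ (−M_L). -/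
open MvPolynomial Matrix

/-- Membership in the convex cone `C_L = {c + Σᵢ uᵢᵀ L uᵢ ∣ c ≥ 0, uᵢ ∈ ℝᵐ}`. -/
def memC {n m : ℕ} (A : Fin (n+1) → Matrix (Fin m) (Fin m) ℝ)
    (p : MvPolynomial (Fin n) ℝ) : Prop :=
  ∃ (c : ℝ), 0 ≤ c ∧ ∃ (k : ℕ) (u : Fin k → Fin m → ℝ),
    p = MvPolynomial.C c +
      ∑ i, ∑ a, ∑ b, MvPolynomial.C (u i a) * pencilPoly A a b * MvPolynomial.C (u i b)

/-- The support `supp M_L = M_L ∩ (-M_L)` of the quadratic module `M_L`. -/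
def memSuppQM {n m : ℕ} (A : Fin (n+1) → Matrix (Fin m) (Fin m) ℝ)
    (p : MvPolynomial (Fin n) ℝ) : Prop :=
  memQM A p ∧ memQM A (-p)

/-!
The support radical `J = √(supp M_L)` is convex for `M_L`: if `p, q ∈ M_L` and `p + q ∈ J`, then
`p ∈ J`. Consider the `ℝ[X]/J`-valued quadratic map `Q (u, a) = uᵀ L u + a²` on `ℝᵐ × ℝ`. Convexity
of `J` shows that `-Q w` lies in the convex cone generated by the values of `Q` only if `Q w = 0`,
and a polarization argument over `ℝ[X]` shows that `w` is then in the radical of `Q`. Modulo this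
radical the values of `Q` on the unit sphere form a compact set whose convex hull avoids `0`. So, if
`f ∉ C_L + J`, Hahn–Banach yields a linear functional that vanishes on `J`, is negative at `f`, and
is positive at every nonzero value of `Q`. Normalized to be `1` at `1`, it agrees on polynomials of
degree at most one with evaluation at a point, which lies in `S_L` and at which `f` is negative.
-/

/-- A *quadratic module* of a commutative ring: an additive submonoid that contains `1` and is
closed under multiplication by squares. -/
structure IsQuadraticModule {R : Type*} [CommRing R] (Q : AddSubmonoid R) : Prop where
  one_mem : 1 ∈ Q
  sq_mul_mem (a : R) {p : R} : p ∈ Q → a ^ 2 * p ∈ Q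

namespace IsQuadraticModule

variable {R : Type*} [CommRing R] {Q : AddSubmonoid R}

theorem sq_mem (hQ : IsQuadraticModule Q) (a : R) : a ^ 2 ∈ Q := by
  simpa using hQ.sq_mul_mem a hQ.one_mem

theorem sup_ideal (hQ : IsQuadraticModule Q) (I : Ideal R) :
    IsQuadraticModule (Q ⊔ I.toAddSubmonoid) where
  one_mem := le_sup_left (a := Q) hQ.one_mem
  sq_mul_mem a p hp := by
    obtain ⟨x, hx, y, hy, rfl⟩ := AddSubmonoid.mem_sup.1 hp
    rw [mul_add]
    exact AddSubmonoid.add_mem_sup (hQ.sq_mul_mem a hx) (I.mul_mem_left _ hy)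

variable [Invertible (2 : R)]

/-- The support `Q ∩ -Q` of a quadratic module as an ideal. Multiplication by `a` stays in it
because `a = ((a + 1) / 2) ^ 2 - ((a - 1) / 2) ^ 2`. -/
def support (hQ : IsQuadraticModule Q) : Ideal R where
  __ := Q.support
  smul_mem' a p := by
    have half : (2 : R) * ⅟2 = 1 := mul_invOf_self 2
    have smul_mem (p : R) (hp : p ∈ Q) (hp' : -p ∈ Q) : a * p ∈ Q := by
      convert add_mem (hQ.sq_mul_mem (⅟2 * (a + 1)) hp) (hQ.sq_mul_mem (⅟2 * (a - 1)) hp') using 1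
      linear_combination -(a * p * (2 * ⅟2 + 1)) * half
    rintro ⟨hp, hp'⟩
    exact ⟨smul_mem p hp hp', by simpa using smul_mem (-p) hp' (by simpa using hp)⟩

theorem mem_support {hQ : IsQuadraticModule Q} {p : R} : p ∈ hQ.support ↔ p ∈ Q ∧ -p ∈ Q :=
  Iff.rfl

theorem pow_four_mem_support (hQ : IsQuadraticModule Q) {p q : R} (hp : p ∈ Q) (hq : q ∈ Q)
    (hpq : (p + q) ^ 2 ∈ hQ.support) : p ^ 4 ∈ hQ.support := by
  -- Where `p ≠ 0`, `upper` says `p ≤ 1 / 2`, whereas `lower` and `p ≥ 0` say `p ≥ 1`. In both, the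
  -- cross term `p ^ 2 * (p + q)` of a square is cancelled by `p ^ 2 * q = p ^ 2 * (p + q) - p ^ 3`.
  have mul_mem (a : R) : a * (p + q) ^ 2 ∈ Q := (hQ.support.mul_mem_left a hpq).1
  have upper : p ^ 2 - 2 * p ^ 3 ∈ Q := by
    convert add_mem (add_mem (hQ.sq_mem (p - p * (p + q))) (nsmul_mem (hQ.sq_mul_mem p hq) 2))
      (mul_mem (-p ^ 2)) using 1
    rw [nsmul_eq_mul]
    ring
  have lower : 4 * p ^ 4 - 4 * p ^ 3 ∈ Q := by
    convert add_mem (add_mem (hQ.sq_mem (2 * p ^ 2 - (p + q))) (hQ.sq_mul_mem (2 * p) hq))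
      (mul_mem (-1)) using 1
    ring
  have bounded : 2 * p ^ 4 * (1 - 4 * p ^ 2) ∈ Q := by
    convert add_mem (add_mem (hQ.sq_mul_mem (p * (1 + 2 * p)) upper)
      (hQ.sq_mem ((1 - 2 * p) * p ^ 2)))
      (nsmul_mem (hQ.sq_mul_mem ((1 - 2 * p) * p ^ 2) hp) 2) using 1
    rw [nsmul_eq_mul]
    ring
  have neg : -(8 * p ^ 4) ∈ Q := by
    convert add_mem (add_mem (hQ.sq_mul_mem (1 + 2 * p) lower) (hQ.sq_mul_mem (2 * p) hp))
      (nsmul_mem bounded 2) using 1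
    rw [nsmul_eq_mul]
    ring
  have pos : 8 * p ^ 4 ∈ Q := by
    convert nsmul_mem (hQ.sq_mem (p ^ 2)) 8 using 1
    rw [nsmul_eq_mul]
    ring
  convert hQ.support.mul_mem_left (⅟2 ^ 3) (mem_support.2 ⟨pos, neg⟩) using 1
  rw [show (8 : R) = 2 ^ 3 by norm_num, ← mul_assoc, ← mul_pow, invOf_mul_self, one_pow, one_mul]

theorem support_sup_ideal_le_radical (hQ : IsQuadraticModule Q) {I : Ideal R}
    (hI : ∀ x ∈ I, x ^ 2 ∈ hQ.support) :
    (hQ.sup_ideal I).support ≤ hQ.support.radical := by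
  rintro _ ⟨hx, hx'⟩
  obtain ⟨p, hp, a, ha, rfl⟩ := AddSubmonoid.mem_sup.1 hx
  obtain ⟨q, hq, b, hb, hqb⟩ := AddSubmonoid.mem_sup.1 hx'
  have hpq : p + q = -(a + b) := by linear_combination hqb
  have hsq : (p + q) ^ 2 ∈ hQ.support := by
    rw [hpq]
    exact hI _ (I.neg_mem (I.add_mem ha hb))
  exact add_mem ⟨4, hQ.pow_four_mem_support hp hq hsq⟩ ⟨2, hI a ha⟩

theorem mem_radical_of_add_pow_mem (hQ : IsQuadraticModule Q) {p q : R} (hp : p ∈ Q) (hq : q ∈ Q)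
    {k : ℕ} (hpq : (p + q) ^ 2 ^ k ∈ hQ.support) : p ∈ hQ.support.radical := by
  induction k generalizing Q with
  | zero =>
    rw [pow_zero, pow_one] at hpq
    exact Ideal.le_radical ⟨hp, by simpa using add_mem hq hpq.2⟩
  | succ k ih =>
    set I := Ideal.span {(p + q) ^ 2 ^ k}
    have hsq : ∀ x ∈ I, x ^ 2 ∈ hQ.support := fun x hx ↦ by
      obtain ⟨a, rfl⟩ := Ideal.mem_span_singleton'.1 hx
      rw [mul_pow, ← pow_mul, ← pow_succ]
      exact Ideal.mul_mem_left _ _ hpq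
    have hmem : (p + q) ^ 2 ^ k ∈ I := Ideal.mem_span_singleton_self _
    refine Ideal.radical_le_radical_iff.2 (hQ.support_sup_ideal_le_radical hsq) <|
      ih (hQ.sup_ideal I) (le_sup_left (a := Q) hp) (le_sup_left (a := Q) hq)
        ⟨le_sup_right (a := Q) hmem, le_sup_right (a := Q) (I.neg_mem hmem)⟩

theorem mem_radical_of_add_mem (hQ : IsQuadraticModule Q) {p q : R} (hp : p ∈ Q) (hq : q ∈ Q)
    (hpq : p + q ∈ hQ.support.radical) : p ∈ hQ.support.radical := by
  obtain ⟨k, hk⟩ := hpq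
  exact hQ.mem_radical_of_add_pow_mem hp hq
    (hQ.support.pow_mem_of_pow_mem hk Nat.lt_two_pow_self.le)

theorem polar_mem_radical (hQ : IsQuadraticModule Q) {N : Type*} [AddCommGroup N] [Module R N]
    {q : QuadraticMap R N R} (hq : ∀ v, q v ∈ Q) {u : N} (hu : q u ∈ hQ.support.radical) (v : N) :
    QuadraticMap.polar q u v ∈ hQ.support.radical := by
  set a := QuadraticMap.polar q u v with ha
  have q_sub (c d : R) : q (c • u - d • v) = c ^ 2 * q u - c * d * a + d ^ 2 * q v := by
    rw [sub_eq_add_neg, ← neg_smul, QuadraticMap.map_add q]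
    simp only [QuadraticMap.polar_smul_left, QuadraticMap.polar_smul_right, QuadraticMap.map_smul,
      smul_eq_mul, ← ha]
    ring
  -- Modulo `q u`, the two values of `q` are `-a ^ 2 * q v` and `a ^ 2 * q v - 2 * a ^ 2`.
  have hsum : a ^ 2 + (q ((2 * q v) • u - a • v) + q ((2 : R) • u - a • v) + a ^ 2) =
      4 * (q v ^ 2 + 1) * q u := by
    rw [q_sub, q_sub]
    ring
  have hmem : 4 * (q v ^ 2 + 1) * q u ∈ hQ.support.radical := Ideal.mul_mem_left _ _ hu
  rw [← hsum] at hmem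
  have ha2 : a ^ 2 ∈ hQ.support.radical :=
    hQ.mem_radical_of_add_mem (hQ.sq_mem a) (add_mem (add_mem (hq _) (hq _)) (hQ.sq_mem a)) hmem
  exact Ideal.radical_isRadical _ ⟨2, ha2⟩

end IsQuadraticModule

section ConvexCone

theorem isCompact_convexHull_of_finiteDimensional {E : Type*} [AddCommGroup E] [Module ℝ E]
    [FiniteDimensional ℝ E] [TopologicalSpace E] [ContinuousAdd E] [ContinuousSMul ℝ E]
    {s : Set E} (hs : IsCompact s) : IsCompact (convexHull ℝ s) := by
  let combinations (k : ℕ) : Set E :=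
    (fun p : (Fin k → ℝ) × (Fin k → E) ↦ ∑ i, p.1 i • p.2 i) ''
      (stdSimplex ℝ (Fin k) ×ˢ Set.univ.pi fun _ ↦ s)
  have caratheodory :
      convexHull ℝ s = ⋃ k ∈ Finset.range (Module.finrank ℝ E + 2), combinations k := by
    ext x
    simp only [Set.mem_iUnion, exists_prop, Finset.mem_range]
    constructor
    · intro hx
      obtain ⟨ι, _, z, w, hz, hind, hw, hw1, rfl⟩ := eq_pos_convex_span_of_mem_convexHull hx
      let e := (Fintype.equivFin ι).symm
      have hcard := hind.card_le_finrank_succ.trans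
        (Nat.succ_le_succ (Submodule.finrank_le (vectorSpan ℝ (Set.range z))))
      exact ⟨Fintype.card ι, by omega, ⟨w ∘ e, z ∘ e⟩,
        ⟨⟨fun i ↦ (hw _).le, (e.sum_comp w).trans hw1⟩, fun i _ ↦ hz ⟨_, rfl⟩⟩,
        e.sum_comp fun i ↦ w i • z i⟩
    · rintro ⟨k, -, ⟨w, z⟩, ⟨⟨hw, hw1⟩, hz⟩, rfl⟩
      exact mem_convexHull_of_exists_fintype w z hw hw1 (fun i ↦ hz i trivial) rfl
  rw [caratheodory]
  refine Finset.isCompact_biUnion _ fun k _ ↦ ?_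
  exact ((isCompact_stdSimplex ℝ (Fin k)).prod (isCompact_univ_pi fun _ ↦ hs)).image (by fun_prop)

theorem exists_neg_mem_hull_of_zero_mem_convexHull {𝕜 E : Type*} [Field 𝕜] [LinearOrder 𝕜]
    [IsStrictOrderedRing 𝕜] [AddCommGroup E] [Module 𝕜 E] {s : Set E}
    (h : (0 : E) ∈ convexHull 𝕜 s) : ∃ x ∈ s, -x ∈ PointedCone.hull 𝕜 s := by
  classical
  obtain ⟨ι, _, w, z, hw, hw1, hz, hsum⟩ := mem_convexHull_iff_exists_fintype.1 h
  obtain ⟨i, hi⟩ : ∃ i, w i ≠ 0 := by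
    by_contra! hw0
    simp [hw0] at hw1
  have hneg : -z i = (w i)⁻¹ • ∑ j ∈ Finset.univ.erase i, w j • z j := by
    rw [← Finset.add_sum_erase _ _ (Finset.mem_univ i), add_comm, ← eq_neg_iff_add_eq_zero] at hsum
    rw [hsum, smul_neg, inv_smul_smul₀ hi]
  refine ⟨z i, hz i, ?_⟩
  rw [hneg]
  exact PointedCone.smul_mem _ (inv_nonneg.2 (hw i)) <| sum_mem fun j _ ↦
    PointedCone.smul_mem _ (hw j) (PointedCone.subset_hull (hz j))

theorem exists_forall_pos_of_isCompact {E : Type*} [AddCommGroup E] [Module ℝ E]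
    [FiniteDimensional ℝ E] [TopologicalSpace E] [IsTopologicalAddGroup E] [ContinuousSMul ℝ E]
    [LocallyConvexSpace ℝ E] [T2Space E] {s : Set E} (hs : IsCompact s)
    (h : ∀ x ∈ s, -x ∉ PointedCone.hull ℝ s) : ∃ φ : StrongDual ℝ E, ∀ x ∈ s, 0 < φ x := by
  have h0 : (0 : E) ∉ convexHull ℝ s := fun h0 ↦
    let ⟨x, hx, hneg⟩ := exists_neg_mem_hull_of_zero_mem_convexHull h0
    h x hx hneg
  obtain ⟨φ, r, hr, hφ⟩ := geometric_hahn_banach_point_closed (convex_convexHull ℝ s)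
    (isCompact_convexHull_of_finiteDimensional hs).isClosed h0
  rw [map_zero] at hr
  exact ⟨φ, fun x hx ↦ hr.trans (hφ x (subset_convexHull ℝ s hx))⟩

theorem mem_hull_image_iff {R E F : Type*} [Semiring R] [PartialOrder R] [IsOrderedRing R]
    [AddCommMonoid E] [Module R E] [AddCommMonoid F] [Module R F] {f : E →ₗ[R] F} {s : Set E}
    {y : F} : y ∈ PointedCone.hull R (f '' s) ↔ ∃ x ∈ PointedCone.hull R s, f x = y :=
  (SetLike.ext_iff.1 (Submodule.map_span (f.restrictScalars {c : R // 0 ≤ c}) s) y).symm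

theorem eq_zero_and_neg_mem_of_smul_sub_mem_sup_hull_neg {𝕜 E : Type*} [Field 𝕜] [LinearOrder 𝕜]
    [IsStrictOrderedRing 𝕜] [AddCommGroup E] [Module 𝕜 E] {K : PointedCone 𝕜 E} {e x : E}
    (he : e ∉ K) (hx : x ∈ K) {c : 𝕜} (hc : 0 ≤ c) (h : c • e - x ∈ K ⊔ PointedCone.hull 𝕜 {-e}) :
    c = 0 ∧ -x ∈ K := by
  obtain ⟨y, hy, _, hs, hyx⟩ := Submodule.mem_sup.1 h
  obtain ⟨⟨s, hs0⟩, rfl⟩ := Submodule.mem_span_singleton.1 hs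
  obtain rfl : y = (c + s) • e - x := by
    rw [Nonneg.mk_smul] at hyx
    rw [eq_sub_of_add_eq hyx]
    module
  have hsum : (c + s) • e ∈ K := by simpa using add_mem hy hx
  have hcs : c + s = 0 := by
    by_contra hcs
    refine he ?_
    rw [← inv_smul_smul₀ hcs e]
    exact PointedCone.smul_mem K (inv_nonneg.2 (add_nonneg hc hs0)) hsum
  exact ⟨((add_eq_zero_iff_of_nonneg hc hs0).1 hcs).1, by simpa [hcs] using hy⟩

end ConvexCone

section QuadraticMap

theorem continuous_quadraticMap {M E : Type*} [NormedAddCommGroup M] [NormedSpace ℝ M]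
    [FiniteDimensional ℝ M] [NormedAddCommGroup E] [NormedSpace ℝ E] (Q : QuadraticMap ℝ M E) :
    Continuous Q := by
  let B : M →ₗ[ℝ] M →L[ℝ] E :=
    LinearMap.toContinuousLinearMap.toLinearMap ∘ₗ QuadraticMap.associated Q
  have hB : Continuous fun x ↦ B x x := B.continuous_of_finiteDimensional.clm_apply continuous_id
  exact (funext (QuadraticMap.associated_eq_self_apply ℝ Q) : (fun x ↦ B x x) = Q) ▸ hB

theorem exists_posDef_compQuadraticMap_of_normed {M E : Type*}
    [NormedAddCommGroup M] [NormedSpace ℝ M] [FiniteDimensional ℝ M]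
    [NormedAddCommGroup E] [NormedSpace ℝ E] [FiniteDimensional ℝ E] (Q : QuadraticMap ℝ M E)
    (hQ : ∀ x, -Q x ∈ PointedCone.hull ℝ (Set.range Q) → x = 0) :
    ∃ φ : E →ₗ[ℝ] ℝ, (φ.compQuadraticMap Q).PosDef := by
  have hsphere : ∀ y ∈ Q '' Metric.sphere 0 1,
      -y ∉ PointedCone.hull ℝ (Q '' Metric.sphere 0 1) := by
    rintro _ ⟨x, hx, rfl⟩ hneg
    have hx0 := hQ x (Submodule.span_mono (Set.image_subset_range _ _) hneg)
    simp [hx0] at hx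
  obtain ⟨φ, hφ⟩ := exists_forall_pos_of_isCompact
    ((isCompact_sphere 0 1).image (continuous_quadraticMap Q)) hsphere
  refine ⟨φ, fun x hx ↦ ?_⟩
  have hunit := hφ _ ⟨‖x‖⁻¹ • x, by simp [norm_smul, hx], rfl⟩
  rw [Q.map_smul, map_smul] at hunit
  exact pos_of_mul_pos_right hunit (mul_self_nonneg _)

theorem exists_posDef_compQuadraticMap {M E : Type*} [AddCommGroup M] [Module ℝ M]
    [FiniteDimensional ℝ M] [AddCommGroup E] [Module ℝ E] (Q : QuadraticMap ℝ M E)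
    (hQ : ∀ x, -Q x ∈ PointedCone.hull ℝ (Set.range Q) → x = 0) :
    ∃ φ : E →ₗ[ℝ] ℝ, (φ.compQuadraticMap Q).PosDef := by
  let V : Submodule ℝ E := Submodule.map₂ (QuadraticMap.associated Q) ⊤ ⊤
  have hV (x) : Q x ∈ V := by
    rw [← QuadraticMap.associated_eq_self_apply ℝ Q x]
    exact Submodule.apply_mem_map₂ _ trivial trivial
  have : FiniteDimensional ℝ V :=
    Module.Finite.iff_fg.2 (.map₂ _ Module.Finite.fg_top Module.Finite.fg_top)
  let e := (Module.finBasis ℝ M).equivFun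
  let e' := (Module.finBasis ℝ V).equivFun
  obtain ⟨π, hπ⟩ := LinearMap.exists_extend e'.toLinearMap
  let ρ := V.subtype ∘ₗ e'.symm.toLinearMap
  have hρπ (x) : ρ (π (Q x)) = Q x := by
    have hx : π (Q x) = e' ⟨Q x, hV x⟩ := LinearMap.congr_fun hπ ⟨Q x, hV x⟩
    simp [ρ, hx]
  let Q' := π.compQuadraticMap (Q.comp e.symm.toLinearMap)
  obtain ⟨φ, hφ⟩ := exists_posDef_compQuadraticMap_of_normed Q' fun x hx ↦ by
    have hρx : ρ (-Q' x) ∈ PointedCone.hull ℝ (ρ '' Set.range Q') :=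
      mem_hull_image_iff.2 ⟨_, hx, rfl⟩
    rw [← Set.range_comp, map_neg] at hρx
    refine e.symm.map_eq_zero_iff.1 (hQ _ (Submodule.span_mono ?_ (hρπ (e.symm x) ▸ hρx)))
    rintro _ ⟨y, rfl⟩
    exact ⟨e.symm y, (hρπ _).symm⟩
  refine ⟨φ ∘ₗ π, fun x hx ↦ ?_⟩
  simpa [Q'] using hφ (e x) (e.map_ne_zero_iff.2 hx)

theorem exists_forall_pos_of_notMem_radical {M E : Type*} [AddCommGroup M] [Module ℝ M]
    [FiniteDimensional ℝ M] [AddCommGroup E] [Module ℝ E] (Q : QuadraticMap ℝ M E)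
    (hQ : ∀ x, -Q x ∈ PointedCone.hull ℝ (Set.range Q) → x ∈ Q.radical) :
    ∃ φ : E →ₗ[ℝ] ℝ, ∀ x ∉ Q.radical, 0 < φ (Q x) := by
  let Q' := Q.lift Q.radical le_rfl
  have hrange : Set.range Q' = Set.range Q :=
    Q.radical.mkQ_surjective.range_comp Q' ▸ rfl
  obtain ⟨φ, hφ⟩ := exists_posDef_compQuadraticMap Q' fun x ↦ by
    obtain ⟨x, rfl⟩ := Q.radical.mkQ_surjective x
    rw [hrange]
    exact fun hx ↦ (Submodule.Quotient.mk_eq_zero _).2 (hQ x hx)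
  exact ⟨φ, fun x hx ↦ hφ (Q.radical.mkQ x) (mt (Submodule.Quotient.mk_eq_zero _).1 hx)⟩

theorem exists_neg_and_forall_pos_of_notMem_hull {M E : Type*} [AddCommGroup M] [Module ℝ M]
    [FiniteDimensional ℝ M] [AddCommGroup E] [Module ℝ E] (Q : QuadraticMap ℝ M E)
    (hQ : ∀ x, -Q x ∈ PointedCone.hull ℝ (Set.range Q) → x ∈ Q.radical)
    {e : E} (he : e ∉ PointedCone.hull ℝ (Set.range Q)) :
    ∃ φ : E →ₗ[ℝ] ℝ, φ e < 0 ∧ ∀ x ∉ Q.radical, 0 < φ (Q x) := by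
  set K := PointedCone.hull ℝ (Set.range Q)
  have hK (x) : Q x ∈ K := PointedCone.subset_hull ⟨x, rfl⟩
  -- Negativity at `e` becomes positivity on a value of `Q'`.
  let Q' : QuadraticMap ℝ (M × ℝ) E :=
    Q.prod ((LinearMap.toSpanSingleton ℝ E (-e)).compQuadraticMap QuadraticMap.sq)
  have hQ' (x t) : Q' (x, t) = Q x - (t * t) • e := by simp [Q', sub_eq_add_neg]
  have mem_radical_iff (x) : (x, (0 : ℝ)) ∈ Q'.radical ↔ x ∈ Q.radical := by
    simp [QuadraticMap.mem_radical_iff', hQ']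
  have hull_le : PointedCone.hull ℝ (Set.range Q') ≤ K ⊔ PointedCone.hull ℝ {-e} := by
    refine Submodule.span_le.2 ?_
    rintro _ ⟨⟨x, t⟩, rfl⟩
    rw [hQ', sub_eq_add_neg, ← smul_neg]
    exact Submodule.add_mem_sup (hK x)
      (PointedCone.smul_mem _ (mul_self_nonneg t) (PointedCone.subset_hull rfl))
  obtain ⟨φ, hφ⟩ := exists_forall_pos_of_notMem_radical Q' fun ⟨x, t⟩ hx ↦ by
    have hmem := hull_le hx
    rw [hQ', neg_sub] at hmem
    obtain ⟨htt, hneg⟩ := eq_zero_and_neg_mem_of_smul_sub_mem_sup_hull_neg he (hK x)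
      (mul_self_nonneg t) hmem
    obtain rfl := mul_self_eq_zero.1 htt
    exact (mem_radical_iff x).2 (hQ x hneg)
  have he0 : ((0 : M), (1 : ℝ)) ∉ Q'.radical := fun h ↦ by
    have hQ'0 := (QuadraticMap.mem_radical_iff'.1 h).1
    simp only [hQ', QuadraticMap.map_zero, mul_one, one_smul, zero_sub, neg_eq_zero] at hQ'0
    exact he (hQ'0 ▸ zero_mem _)
  exact ⟨φ, by simpa [hQ'] using hφ _ he0,
    fun x hx ↦ by simpa [hQ'] using hφ _ ((mem_radical_iff x).not.2 hx)⟩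

end QuadraticMap

namespace IsQuadraticModule

variable {R : Type*} [CommRing R] [Algebra ℝ R] {Q : AddSubmonoid R}

theorem hull_subset (hQ : IsQuadraticModule Q) {s : Set R} (hs : s ⊆ Q) :
    (PointedCone.hull ℝ s : Set R) ⊆ Q := by
  intro x hx
  induction hx using Submodule.span_induction with
  | mem x hx => exact hs hx
  | zero => exact zero_mem Q
  | add x y _ _ hx hy => exact add_mem hx hy
  | smul c x _ hx =>
    have hc : c • x = algebraMap ℝ R (√c) ^ 2 * x := by
      rw [← map_pow, Real.sq_sqrt c.2, ← Algebra.smul_def]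
      rfl
    exact hc ▸ hQ.sq_mul_mem _ hx

variable [Invertible (2 : R)]

theorem exists_separating_functional (hQ : IsQuadraticModule Q) {M N : Type*} [AddCommGroup M]
    [Module ℝ M] [FiniteDimensional ℝ M] [AddCommGroup N] [Module ℝ N] [Module R N]
    [IsScalarTower ℝ R N] {q : QuadraticMap R N R} (hq : ∀ v, q v ∈ Q) (ι : M →ₗ[ℝ] N) {f : R}
    (hf : ∀ g ∈ PointedCone.hull ℝ (Set.range fun u ↦ q (ι u)), f - g ∉ hQ.support.radical) :
    ∃ φ : R →ₗ[ℝ] ℝ, (∀ p ∈ hQ.support.radical, φ p = 0) ∧ φ f < 0 ∧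
      ∀ u, q (ι u) ∉ hQ.support.radical → 0 < φ (q (ι u)) := by
  set J := hQ.support.radical
  let π : R →ₗ[ℝ] R ⧸ J := (Ideal.Quotient.mkₐ ℝ J).toLinearMap
  have hπ (p) : π p = 0 ↔ p ∈ J := Ideal.Quotient.eq_zero_iff_mem
  let Q' := π.compQuadraticMap ((q.restrictScalars (S := ℝ)).comp ι)
  have hQ' (u) : Q' u = π (q (ι u)) := rfl
  have exists_of_mem_hull {y} (hy : y ∈ PointedCone.hull ℝ (Set.range Q')) :
      ∃ g ∈ PointedCone.hull ℝ (Set.range fun u ↦ q (ι u)), π g = y := by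
    rw [← mem_hull_image_iff, ← Set.range_comp]
    exact hy
  have mem_radical (u) (hu : q (ι u) ∈ J) : u ∈ Q'.radical := by
    refine QuadraticMap.mem_radical_iff'.2 ⟨(hπ _).2 hu, fun v ↦ ?_⟩
    have hpolar := (hπ _).2 (hQ.polar_mem_radical hq hu (ι v))
    rw [hQ', hQ', map_add, QuadraticMap.map_add q, map_add, map_add, hpolar,
      (hπ _).2 hu, zero_add, add_zero]
  obtain ⟨φ, hφf, hφ⟩ := exists_neg_and_forall_pos_of_notMem_hull Q' (e := π f)
    (fun u hu ↦ by
      obtain ⟨g, hg, hgu⟩ := exists_of_mem_hull hu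
      refine mem_radical u (hQ.mem_radical_of_add_mem (hq _) (hQ.hull_subset ?_ hg) ?_)
      · rintro _ ⟨v, rfl⟩
        exact hq _
      · rw [← hπ, map_add, hgu, hQ', add_neg_cancel])
    (fun hfmem ↦ by
      obtain ⟨g, hg, hgf⟩ := exists_of_mem_hull hfmem
      exact hf g hg ((hπ _).1 (by rw [map_sub, hgf, sub_self])))
  refine ⟨φ ∘ₗ π, fun p hp ↦ ?_, hφf, fun u hu ↦ hφ u fun h ↦ hu ?_⟩
  · rw [LinearMap.comp_apply, (hπ p).2 hp, map_zero]
  · exact (hπ _).1 (QuadraticMap.mem_radical_iff'.1 h).1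

end IsQuadraticModule

noncomputable instance invertibleTwoMvPolynomial {σ R : Type*} [CommSemiring R]
    [Invertible (2 : R)] : Invertible (2 : MvPolynomial σ R) :=
  (Invertible.map C (2 : R)).copy _ (map_ofNat C 2).symm

theorem eval_eq_of_totalDegree_le_one {σ R : Type*} [CommSemiring R]
    {φ : MvPolynomial σ R →ₗ[R] R} (hφ : φ 1 = 1) {f : MvPolynomial σ R} (hf : f.totalDegree ≤ 1) :
    eval (fun i ↦ φ (X i)) f = φ f := by
  rw [f.as_sum, map_sum, map_sum]
  refine Finset.sum_congr rfl fun d hd ↦ ?_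
  rw [← mul_one (coeff d f), ← smul_eq_mul, ← smul_monomial, smul_eval, map_smul,
    smul_eq_mul]
  rcases Nat.le_one_iff_eq_zero_or_eq_one.1 ((le_totalDegree hd).trans hf) with h0 | h1
  · obtain rfl := (Finsupp.degree_eq_zero_iff d).1 h0
    simp [hφ]
  · obtain ⟨i, rfl⟩ := (Finsupp.sum_eq_one_iff d).1 h1
    change coeff _ f * eval _ (X i) = coeff _ f * φ (X i)
    rw [eval_X]

section Pencil

variable {n m : ℕ} (A : Fin (n + 1) → Matrix (Fin m) (Fin m) ℝ)

theorem vLv_mul (a : MvPolynomial (Fin n) ℝ) (v : Fin m → MvPolynomial (Fin n) ℝ) :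
    vLv A (fun b ↦ a * v b) = a ^ 2 * vLv A v := by
  simp only [vLv, Finset.mul_sum]
  refine Finset.sum_congr rfl fun b _ ↦ Finset.sum_congr rfl fun b' _ ↦ ?_
  ring

theorem eval_vLv (v : Fin m → MvPolynomial (Fin n) ℝ) (x : Fin n → ℝ) :
    eval x (vLv A v) =
      (fun a ↦ eval x (v a)) ⬝ᵥ pencilEval A x *ᵥ (fun a ↦ eval x (v a)) := by
  simp only [vLv, pencilPoly, pencilEval, dotProduct, mulVec, map_sum, map_mul, map_add, eval_C,
    eval_X, Matrix.add_apply, Matrix.sum_apply, Matrix.smul_apply, smul_eq_mul, Finset.mul_sum,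
    mul_assoc]

theorem totalDegree_vLv_C_le_one (u : Fin m → ℝ) : (vLv A fun a ↦ C (u a)).totalDegree ≤ 1 := by
  rw [← mem_restrictTotalDegree]
  refine sum_mem fun a _ ↦ sum_mem fun b _ ↦ ?_
  rw [mul_comm, ← smul_eq_C_mul, ← smul_eq_C_mul]
  refine Submodule.smul_mem _ _ (Submodule.smul_mem _ _ (add_mem ?_ (sum_mem fun i _ ↦ ?_)))
  · simp [mem_restrictTotalDegree]
  · rw [mul_comm, ← smul_eq_C_mul]
    exact Submodule.smul_mem _ _ (by simp [mem_restrictTotalDegree])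

variable {A} in
theorem isHermitian_pencilEval (hsymm : ∀ i, (A i).IsSymm) (x : Fin n → ℝ) :
    (pencilEval A x).IsHermitian := by
  rw [IsHermitian, conjTranspose_eq_transpose_of_trivial, pencilEval, transpose_add, transpose_sum]
  simp only [transpose_smul, (hsymm _).eq]

/-- The quadratic module `M_L`, see `memQM`, as an additive submonoid. -/
noncomputable def pencilQuadraticModule : AddSubmonoid (MvPolynomial (Fin n) ℝ) where
  carrier := {p | memQM A p}
  zero_mem' := ⟨0, 0, Fin.elim0, Fin.elim0, by simp⟩
  add_mem' := by
    rintro _ _ ⟨k, r, q, v, rfl⟩ ⟨k', r', q', v', rfl⟩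
    refine ⟨k + k', r + r', Fin.append q q', Fin.append v v', ?_⟩
    simp only [Fin.sum_univ_add, Fin.append_left, Fin.append_right]
    ring

theorem isQuadraticModule_pencilQuadraticModule : IsQuadraticModule (pencilQuadraticModule A) where
  one_mem := ⟨1, 0, fun _ ↦ 1, Fin.elim0, by simp⟩
  sq_mul_mem a p := by
    rintro ⟨k, r, q, v, rfl⟩
    refine ⟨k, r, fun i ↦ a * q i, fun j b ↦ a * v j b, ?_⟩
    simp only [vLv_mul, mul_add, Finset.mul_sum, mul_pow]

variable {A} in
theorem mem_radical_support_iff {p : MvPolynomial (Fin n) ℝ} :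
    p ∈ (isQuadraticModule_pencilQuadraticModule A).support.radical ↔
      ∃ k, 0 < k ∧ memSuppQM A (p ^ k) := by
  refine ⟨fun ⟨k, hk⟩ ↦ ⟨k + 1, k.succ_pos, ?_⟩, fun ⟨k, _, hk⟩ ↦ ⟨k, hk⟩⟩
  rw [pow_succ']
  exact Ideal.mul_mem_left _ _ hk

/-- The convex cone `C_L`, see `memC`, as a pointed cone. -/
noncomputable def pencilCone : PointedCone ℝ (MvPolynomial (Fin n) ℝ) where
  carrier := {p | memC A p}
  zero_mem' := ⟨0, le_rfl, 0, Fin.elim0, by simp⟩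
  add_mem' := by
    rintro _ _ ⟨c, hc, k, u, rfl⟩ ⟨c', hc', k', u', rfl⟩
    refine ⟨c + c', add_nonneg hc hc', k + k', Fin.append u u', ?_⟩
    simp only [Fin.sum_univ_add, Fin.append_left, Fin.append_right, map_add]
    ring
  smul_mem' := by
    rintro ⟨t, ht⟩ _ ⟨c, hc, k, u, rfl⟩
    refine ⟨t * c, mul_nonneg ht hc, k, fun i ↦ √t • u i, ?_⟩
    have hsqrt : (C √t * C √t : MvPolynomial (Fin n) ℝ) = C t := by
      rw [← C_mul, Real.mul_self_sqrt ht]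
    rw [Nonneg.mk_smul, smul_eq_C_mul, mul_add, C_mul, ← hsqrt, Finset.mul_sum]
    simp only [Finset.mul_sum, Pi.smul_apply, smul_eq_mul, C_mul]
    congr! 4
    ring

/-- The quadratic map `(v, a) ↦ vᵀ L v + a²`. Its values on polynomial arguments lie in `M_L` and
those on constant arguments generate `C_L`. -/
noncomputable def pencilQuadraticMap : QuadraticMap (MvPolynomial (Fin n) ℝ)
    ((Fin m → MvPolynomial (Fin n) ℝ) × MvPolynomial (Fin n) ℝ) (MvPolynomial (Fin n) ℝ) :=
  (pencilPoly A).toQuadraticForm'.prod QuadraticMap.sq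

theorem toQuadraticForm'_pencilPoly_apply (v : Fin m → MvPolynomial (Fin n) ℝ) :
    (pencilPoly A).toQuadraticForm' v = vLv A v := by
  simp only [toQuadraticForm', LinearMap.BilinMap.toQuadraticMap_apply, toLinearMap₂'_apply',
    dotProduct, mulVec, vLv, Finset.mul_sum, mul_assoc]

theorem pencilQuadraticMap_apply (v : Fin m → MvPolynomial (Fin n) ℝ) (a : MvPolynomial (Fin n) ℝ) :
    pencilQuadraticMap A (v, a) = vLv A v + a ^ 2 := by
  rw [pencilQuadraticMap, QuadraticMap.prod_apply, QuadraticMap.sq_apply, sq,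
    toQuadraticForm'_pencilPoly_apply]

theorem pencilQuadraticMap_mem (w) : pencilQuadraticMap A w ∈ pencilQuadraticModule A := by
  obtain ⟨v, a⟩ := w
  exact ⟨1, 1, fun _ ↦ a, fun _ ↦ v, by simp [pencilQuadraticMap_apply, add_comm]⟩

/-- The inclusion of `ℝᵐ × ℝ` into the arguments of `pencilQuadraticMap` as constant
polynomials. -/
noncomputable def constantArguments (n m : ℕ) : (Fin m → ℝ) × ℝ →ₗ[ℝ]
    (Fin m → MvPolynomial (Fin n) ℝ) × MvPolynomial (Fin n) ℝ :=
  ((Algebra.linearMap ℝ _).compLeft (Fin m)).prodMap (Algebra.linearMap ℝ _)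

theorem pencilQuadraticMap_constantArguments (u : Fin m → ℝ) (a : ℝ) :
    pencilQuadraticMap A (constantArguments n m (u, a)) = vLv A (fun i ↦ C (u i)) + C (a ^ 2) := by
  rw [C_pow]
  exact pencilQuadraticMap_apply A _ _

theorem hull_range_pencilQuadraticMap_le :
    PointedCone.hull ℝ (Set.range fun w ↦ pencilQuadraticMap A (constantArguments n m w)) ≤
      pencilCone A := by
  refine Submodule.span_le.2 ?_
  rintro _ ⟨⟨u, a⟩, rfl⟩
  refine ⟨a ^ 2, sq_nonneg a, 1, fun _ ↦ u, ?_⟩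
  simp only [pencilQuadraticMap_constantArguments, Fin.sum_univ_one, vLv, add_comm]

variable {A}

theorem eval_vLv_nonneg {x : Fin n → ℝ} (hx : x ∈ specSet A)
    (v : Fin m → MvPolynomial (Fin n) ℝ) : 0 ≤ eval x (vLv A v) := by
  rw [eval_vLv]
  exact hx.dotProduct_mulVec_nonneg _

theorem eval_nonneg_of_memQM {x : Fin n → ℝ} (hx : x ∈ specSet A) {p : MvPolynomial (Fin n) ℝ}
    (hp : memQM A p) : 0 ≤ eval x p := by
  obtain ⟨k, r, q, v, rfl⟩ := hp
  simp only [map_add, map_sum, map_pow]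
  exact add_nonneg (Finset.sum_nonneg fun i _ ↦ sq_nonneg _)
    (Finset.sum_nonneg fun j _ ↦ eval_vLv_nonneg hx _)

theorem eval_nonneg_of_memC {x : Fin n → ℝ} (hx : x ∈ specSet A) {p : MvPolynomial (Fin n) ℝ}
    (hp : memC A p) : 0 ≤ eval x p := by
  obtain ⟨c, hc, k, u, rfl⟩ := hp
  rw [map_add, eval_C, map_sum]
  exact add_nonneg hc (Finset.sum_nonneg fun i _ ↦ eval_vLv_nonneg hx fun a ↦ C (u i a))

theorem eval_eq_zero_of_pow_memSuppQM {x : Fin n → ℝ} (hx : x ∈ specSet A)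
    {p : MvPolynomial (Fin n) ℝ} {k : ℕ} (hp : memSuppQM A (p ^ k)) : eval x p = 0 := by
  have hnonneg := eval_nonneg_of_memQM hx hp.1
  have hnonpos := eval_nonneg_of_memQM hx hp.2
  rw [map_neg, neg_nonneg] at hnonpos
  rw [map_pow] at hnonneg hnonpos
  exact eq_zero_of_pow_eq_zero (le_antisymm hnonpos hnonneg)

theorem mem_specSet_of_functional_nonneg (hsymm : ∀ i, (A i).IsSymm)
    {φ : MvPolynomial (Fin n) ℝ →ₗ[ℝ] ℝ} (hφ1 : φ 1 = 1)
    (hφ : ∀ u : Fin m → ℝ, 0 ≤ φ (vLv A fun i ↦ C (u i))) :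
    (fun i ↦ φ (X i)) ∈ specSet A := by
  refine PosSemidef.of_dotProduct_mulVec_nonneg (isHermitian_pencilEval hsymm _) fun u ↦ ?_
  have heval := eval_vLv A (fun i ↦ C (u i)) fun i ↦ φ (X i)
  simp only [eval_C] at heval
  rw [star_trivial, ← heval, eval_eq_of_totalDegree_le_one hφ1 (totalDegree_vLv_C_le_one A u)]
  exact hφ u

theorem exists_mem_specSet_eval_neg (hsymm : ∀ i, (A i).IsSymm) {f : MvPolynomial (Fin n) ℝ}
    (hf : f.totalDegree ≤ 1)
    (h : ∀ g, memC A g → f - g ∉ (isQuadraticModule_pencilQuadraticModule A).support.radical) :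
    ∃ x ∈ specSet A, eval x f < 0 := by
  set J := (isQuadraticModule_pencilQuadraticModule A).support.radical
  have one_notMem : (1 : MvPolynomial (Fin n) ℝ) ∉ J := fun h1 ↦
    h 0 (pencilCone A).zero_mem (by rw [(Ideal.eq_top_iff_one J).2 h1]; trivial)
  obtain ⟨φ, hφJ, hφf, hφ⟩ :=
    (isQuadraticModule_pencilQuadraticModule A).exists_separating_functional
      (pencilQuadraticMap_mem A) (constantArguments n m)
      fun g hg ↦ h g (hull_range_pencilQuadraticMap_le A hg)
  simp only [Prod.forall, pencilQuadraticMap_constantArguments] at hφ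
  have hφ1 : 0 < φ 1 := by
    simpa [vLv] using hφ 0 1 (by simpa [vLv] using one_notMem)
  have hφL (u : Fin m → ℝ) : 0 ≤ φ (vLv A fun i ↦ C (u i)) := by
    by_cases hu : vLv A (fun i ↦ C (u i)) ∈ J
    · exact (hφJ _ hu).ge
    · simpa using (hφ u 0 (by simpa using hu)).le
  have hψ1 : ((φ 1)⁻¹ • φ) 1 = 1 := inv_mul_cancel₀ hφ1.ne'
  refine ⟨fun i ↦ ((φ 1)⁻¹ • φ) (X i), mem_specSet_of_functional_nonneg hsymm hψ1 fun u ↦ ?_, ?_⟩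
  · exact mul_nonneg (inv_nonneg.2 hφ1.le) (hφL u)
  · rw [eval_eq_of_totalDegree_le_one hψ1 hf]
    exact mul_neg_of_pos_of_neg (inv_pos.2 hφ1) hφf

end Pencil

/-- **Corollary.** A linear polynomial `f` is nonnegative on `S_L` if and only if
`f ∈ C_L + √(supp M_L)`, the radical `√` of the ideal `supp M_L = M_L ∩ (-M_L)` being
`{p ∣ pᵏ ∈ supp M_L for some k ≥ 1}`. -/
theorem nonneg_on_spectrahedron_iff_mem_cone_add_radical_support
    (n m : ℕ) (A : Fin (n+1) → Matrix (Fin m) (Fin m) ℝ)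
    (hsymm : ∀ i, (A i).IsSymm)
    (f : MvPolynomial (Fin n) ℝ) (hf : f.totalDegree ≤ 1) :
    (∀ x ∈ specSet A, 0 ≤ MvPolynomial.eval x f) ↔
      ∃ g p : MvPolynomial (Fin n) ℝ,
        memC A g ∧ (∃ k : ℕ, 0 < k ∧ memSuppQM A (p^k)) ∧ f = g + p := by
  constructor
  · intro hnonneg
    by_contra! hf_notMem
    obtain ⟨x, hx, hneg⟩ := exists_mem_specSet_eval_neg hsymm hf fun g hg hfg ↦
      hf_notMem g (f - g) hg (mem_radical_support_iff.1 hfg) (add_sub_cancel g f).symm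
    exact (hnonneg x hx).not_gt hneg
  · rintro ⟨g, p, hg, ⟨k, -, hp⟩, rfl⟩ x hx
    rw [map_add, eval_eq_zero_of_pow_memSuppQM hx hp, add_zero]
    exact eval_nonneg_of_memC hx hg
end
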